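/- arXiv:2011.14609 — 5 statements merged into one kernel-verified Lean document; each statement's English description precedes it below -/
import Mathlib

section
/- Let m and n be positive integers with n ≥ 4 even, let 0 ≤ ℓ ≤ n/2 be an integer of the same parity as m, and let Γ = HTG(m,n,ℓ). Then Γ has girth 4 if and only if one of the following holds: (i) n = 4; (ii) m = 1, n ≥ 6 and ℓ = 3; (iii) m = 1, n ≥ 6, n ≡ 2 (mod 4) and ℓ = n/2; (iv) m = 1, n ≥ 8, n ≡ 0 (mod 4) and ℓ = (n−2)/2; (v) m = 2, n ≥ 6 and ℓ ∈ {0, 2}. -/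
namespace HTGPaper

/-- The honeycomb toroidal graph `HTG(m,n,ℓ)`. -/
def HTG (m n ℓ : ℕ) : SimpleGraph (ZMod m × ZMod n) :=
  SimpleGraph.fromRel (fun v w =>
    (v.1 = w.1 ∧ (w.2 = v.2 + 1 ∨ w.2 = v.2 - 1)) ∨
    (v.1.val ≠ m - 1 ∧ w.1 = v.1 + 1 ∧ w.2 = v.2 ∧ v.1.val % 2 ≠ v.2.val % 2) ∨
    (v.1.val = m - 1 ∧ w.1 = 0 ∧ w.2 = v.2 + (ℓ : ZMod n) ∧ v.2.val % 2 = m % 2))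

/-- Generators of the generalized dihedral group `G`. -/
inductive Gen | t | x | y

/-- Relators of the presentation of `G`. -/
def rels (m n ℓ : ℕ) : Set (FreeGroup Gen) :=
  {FreeGroup.of Gen.t ^ 2,
   FreeGroup.of Gen.x ^ (n / 2),
   FreeGroup.of Gen.y ^ m * (FreeGroup.of Gen.x ^ ((ℓ + m) / 2))⁻¹,
   FreeGroup.of Gen.t * FreeGroup.of Gen.x * (FreeGroup.of Gen.t)⁻¹ * FreeGroup.of Gen.x,
   FreeGroup.of Gen.t * FreeGroup.of Gen.y * (FreeGroup.of Gen.t)⁻¹ * FreeGroup.of Gen.y,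
   FreeGroup.of Gen.x * FreeGroup.of Gen.y * (FreeGroup.of Gen.x)⁻¹ * (FreeGroup.of Gen.y)⁻¹}

/-- The group `G = ⟨t,x,y | t², x^{n/2}, y^m x^{-(ℓ+m)/2}, txt⁻¹x, tyt⁻¹y, [x,y]⟩`. -/
abbrev G (m n ℓ : ℕ) : Type := PresentedGroup (rels m n ℓ)

def gent (m n ℓ : ℕ) : G m n ℓ := PresentedGroup.of Gen.t
def genx (m n ℓ : ℕ) : G m n ℓ := PresentedGroup.of Gen.x
def geny (m n ℓ : ℕ) : G m n ℓ := PresentedGroup.of Gen.y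

/-- The connection set `{t, tx, ty}`. -/
def S (m n ℓ : ℕ) : Set (G m n ℓ) :=
  {gent m n ℓ, gent m n ℓ * genx m n ℓ, gent m n ℓ * geny m n ℓ}

/-- The Cayley graph of a group with respect to a subset. -/
def cayley (H : Type*) [Group H] (T : Set H) : SimpleGraph H :=
  SimpleGraph.fromRel (fun g h => ∃ s ∈ T, h = g * s)

/-- The Cayley graph of an additive group with respect to a subset. -/
def addCayley (H : Type*) [AddGroup H] (T : Set H) : SimpleGraph H :=
  SimpleGraph.fromRel (fun g h => ∃ s ∈ T, h = g + s)

/-- `Cay(H;T)` is a normal Cayley graph of `H` if the left regular representation `H_L`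
is a normal subgroup of the automorphism group, i.e. every conjugate of a left
translation by a graph automorphism is again a left translation. -/
def IsNormalCayley (H : Type*) [Group H] (T : Set H) : Prop :=
  ∀ (f : cayley H T ≃g cayley H T) (a : H), ∃ b : H,
    ∀ g : H, f (a * f.symm g) = b * g

/-- An `s`-arc of a graph: `s+1` vertices, consecutive ones adjacent, and any three
consecutive vertices pairwise distinct. -/
def IsSArc {V : Type*} (Γ : SimpleGraph V) (s : ℕ) (p : Fin (s + 1) → V) : Prop :=
  (∀ i : Fin s, Γ.Adj (p i.castSucc) (p i.succ)) ∧
  ∀ i j : Fin (s + 1), (i : ℕ) + 2 = (j : ℕ) → p i ≠ p j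

/-- A graph is `s`-arc-transitive if its automorphism group is transitive on `s`-arcs. -/
def IsSArcTransitive {V : Type*} (Γ : SimpleGraph V) (s : ℕ) : Prop :=
  ∀ p q : Fin (s + 1) → V, IsSArc Γ s p → IsSArc Γ s q →
    ∃ f : Γ ≃g Γ, ∀ i, f (p i) = q i

/-- A graph is `s`-arc-regular if its automorphism group is regular on `s`-arcs. -/
def IsSArcRegular {V : Type*} (Γ : SimpleGraph V) (s : ℕ) : Prop :=
  ∀ p q : Fin (s + 1) → V, IsSArc Γ s p → IsSArc Γ s q →
    ∃! f : Γ ≃g Γ, ∀ i, f (p i) = q i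

/-- A graph is arc-transitive if it is `1`-arc-transitive. -/
def IsArcTransitive {V : Type*} (Γ : SimpleGraph V) : Prop :=
  IsSArcTransitive Γ 1

/-- The generalized prism `GPr(k)`. -/
def GPr (k : ℕ) : SimpleGraph (ZMod 2 × ZMod (2 * k)) :=
  SimpleGraph.fromRel (fun v w =>
    (v.1 = w.1 ∧ (w.2 = v.2 + 1 ∨ w.2 = v.2 - 1)) ∨
    (Even v.2.val ∧ w.1 = v.1 + 1 ∧ w.2 = v.2 + 1))

/-- The cubic graph on `k` vertices given by LCF-type data `f`. -/
def lcfGraph (k : ℕ) (f : ℕ → ℤ) : SimpleGraph (ZMod k) :=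
  SimpleGraph.fromRel (fun v w => w = v + 1 ∨ w = v + (f v.val : ZMod k))

/-- The cube graph `Q₃`, LCF notation `[3,-3]⁴`. -/
def cubeGraph : SimpleGraph (ZMod 8) :=
  lcfGraph 8 (fun i => if i % 2 = 0 then 3 else -3)

/-- The Heawood graph, LCF notation `[5,-5]⁷`. -/
def heawood : SimpleGraph (ZMod 14) :=
  lcfGraph 14 (fun i => if i % 2 = 0 then 5 else -5)

/-- The Möbius–Kantor graph, LCF notation `[5,-5]⁸`. -/
def mobiusKantor : SimpleGraph (ZMod 16) :=
  lcfGraph 16 (fun i => if i % 2 = 0 then 5 else -5)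

/-- The Pappus graph, LCF notation `[5,7,-7,7,-7,-5]³`. -/
def pappus : SimpleGraph (ZMod 18) :=
  lcfGraph 18 (fun i =>
    match i % 6 with
    | 0 => 5 | 1 => 7 | 2 => -7 | 3 => 7 | 4 => -7 | _ => -5)

/-- The red edges of `HTG(m,n,ℓ) = Cay(G;{t,tx,ty})`. -/
def Red (m n ℓ : ℕ) : Set (Sym2 (G m n ℓ)) :=
  {e | ∃ g : G m n ℓ, e = s(g, g * gent m n ℓ)}

/-- The blue edges. -/
def Blue (m n ℓ : ℕ) : Set (Sym2 (G m n ℓ)) :=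
  {e | ∃ g : G m n ℓ, e = s(g, g * (gent m n ℓ * genx m n ℓ))}

/-- The green edges. -/
def Green (m n ℓ : ℕ) : Set (Sym2 (G m n ℓ)) :=
  {e | ∃ g : G m n ℓ, e = s(g, g * (gent m n ℓ * geny m n ℓ))}

/-- The three color classes. -/
def colorClasses (m n ℓ : ℕ) : Set (Set (Sym2 (G m n ℓ))) :=
  {Red m n ℓ, Blue m n ℓ, Green m n ℓ}

/-- An automorphism of `Cay(G;{t,tx,ty})` is color permuting if it preserves the
partition of the edges into the three color classes. -/
def IsColorPermuting {m n ℓ : ℕ}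
    (f : cayley (G m n ℓ) (S m n ℓ) ≃g cayley (G m n ℓ) (S m n ℓ)) : Prop :=
  ∀ C ∈ colorClasses m n ℓ, Sym2.map ⇑f '' C ∈ colorClasses m n ℓ

/-- The group `Aut(H;T)` of automorphisms of `H` fixing `T` setwise. -/
def autFixing (H : Type*) [Group H] (T : Set H) : Subgroup (MulAut H) where
  carrier := {φ | ⇑φ '' T = T}
  one_mem' := by
    show ⇑(1 : MulAut H) '' T = T
    simp
  mul_mem' := by
    intro a b ha hb
    show ⇑(a * b) '' T = T
    have h : ⇑(a * b) = ⇑a ∘ ⇑b := rfl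
    rw [h, Set.image_comp]
    rw [show ⇑b '' T = T from hb, show ⇑a '' T = T from ha]
  inv_mem' := by
    intro a ha
    show ⇑a⁻¹ '' T = T
    conv_lhs => rw [← show ⇑a '' T = T from ha]
    rw [← Set.image_comp]
    have h : ⇑a⁻¹ ∘ ⇑a = id := by
      funext g
      simp
    rw [h, Set.image_id]


/-- Vertical edges. -/
def htgV (m n : ℕ) (v w : ZMod m × ZMod n) : Prop :=
  v.1 = w.1 ∧ (w.2 = v.2 + 1 ∨ w.2 = v.2 - 1)

/-- Outgoing cross edges. -/
def htgO (m n ℓ : ℕ) (v w : ZMod m × ZMod n) : Prop :=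
    (v.1.val ≠ m - 1 ∧ w.1 = v.1 + 1 ∧ w.2 = v.2 ∧ v.1.val % 2 ≠ v.2.val % 2) ∨
    (v.1.val = m - 1 ∧ w.1 = 0 ∧ w.2 = v.2 + (ℓ : ZMod n) ∧ v.2.val % 2 = m % 2)

/-- The bipartition colour. -/
def htgc {m n : ℕ} (v : ZMod m × ZMod n) : ℕ := (v.1.val + v.2.val) % 2

lemma val_cast_par {n : ℕ} (hne : Even n) (k : ℕ) : ((k : ZMod n)).val % 2 = k % 2 := by
  rw [ZMod.val_natCast, Nat.mod_mod_of_dvd _ hne.two_dvd]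

lemma val_add_par {n : ℕ} (hn : 4 ≤ n) (hne : Even n) (a b : ZMod n) :
    (a + b).val % 2 = (a.val + b.val) % 2 := by
  have : NeZero n := ⟨by omega⟩
  rw [ZMod.val_add, Nat.mod_mod_of_dvd _ hne.two_dvd]

lemma val_add_one_par {n : ℕ} (hn : 4 ≤ n) (hne : Even n) (a : ZMod n) :
    (a + 1).val % 2 = (a.val + 1) % 2 := by
  have h := val_add_par hn hne a 1
  have h1 := val_cast_par hne 1
  simp only [Nat.cast_one] at h1
  omega

lemma val_sub_one_par {n : ℕ} (hn : 4 ≤ n) (hne : Even n) (a : ZMod n) :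
    (a - 1).val % 2 = (a.val + 1) % 2 := by
  have h := val_add_one_par hn hne (a - 1)
  rw [sub_add_cancel] at h
  omega

lemma htgV_symm {m n : ℕ} {v w : ZMod m × ZMod n} (h : htgV m n v w) : htgV m n w v := by
  obtain ⟨h1, h2 | h2⟩ := h
  · exact ⟨h1.symm, Or.inr (by rw [h2]; ring)⟩
  · exact ⟨h1.symm, Or.inl (by rw [h2]; ring)⟩

lemma htgV_color {m n : ℕ} (hn : 4 ≤ n) (hne : Even n)
    {v w : ZMod m × ZMod n} (h : htgV m n v w) : htgc w = 1 - htgc v := by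
  obtain ⟨h1, h2 | h2⟩ := h
  · have := val_add_one_par hn hne v.2
    unfold htgc
    rw [← h1, h2]; omega
  · have := val_sub_one_par hn hne v.2
    unfold htgc
    rw [← h1, h2]; omega

lemma htgO_color {m n ℓ : ℕ} (hm : 0 < m) (hn : 4 ≤ n) (hne : Even n) (hpar : ℓ % 2 = m % 2)
    {v w : ZMod m × ZMod n} (h : htgO m n ℓ v w) : htgc v = 1 ∧ htgc w = 0 := by
  have : NeZero m := ⟨by omega⟩
  unfold htgc
  rcases h with ⟨h1, h2, h3, h4⟩ | ⟨h1, h2, h3, h4⟩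
  · rw [h2, h3]
    have hlt := ZMod.val_lt v.1
    have : (v.1 + 1).val = v.1.val + 1 := by
      have h1' : (1 : ZMod m) = ((1 : ℕ) : ZMod m) := by simp
      have h1v : (1 : ZMod m).val = 1 := by
        rw [h1', ZMod.val_natCast, Nat.mod_eq_of_lt (by omega)]
      rw [ZMod.val_add_of_lt] <;> omega
    omega
  · rw [h2, h3]
    have := val_add_par hn hne v.2 (ℓ : ZMod n)
    have := val_cast_par hne ℓ
    simp only [ZMod.val_zero]
    omega

lemma htgO_inj {m n ℓ : ℕ} {v w w' : ZMod m × ZMod n}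
    (h : htgO m n ℓ v w) (h' : htgO m n ℓ v w') : w = w' := by
  rcases h with ⟨h1, h2, h3, h4⟩ | ⟨h1, h2, h3, h4⟩ <;>
  rcases h' with ⟨k1, k2, k3, k4⟩ | ⟨k1, k2, k3, k4⟩
  · exact Prod.ext (h2.trans k2.symm) (h3.trans k3.symm)
  · exact absurd k1 h1
  · exact absurd h1 k1
  · exact Prod.ext (h2.trans k2.symm) (h3.trans k3.symm)

lemma last_add_one {m : ℕ} (hm : 0 < m) {a : ZMod m} (h : a.val = m - 1) : a + 1 = 0 := by
  have : NeZero m := ⟨by omega⟩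
  rw [← ZMod.natCast_zmod_val a, h, ← Nat.cast_one (R := ZMod m), ← Nat.cast_add,
    Nat.sub_add_cancel hm, ZMod.natCast_self]

lemma htgO_fst {m n ℓ : ℕ} (hm : 0 < m) {v w : ZMod m × ZMod n}
    (h : htgO m n ℓ v w) : w.1 = v.1 + 1 := by
  rcases h with ⟨h1, h2, h3, h4⟩ | ⟨h1, h2, h3, h4⟩
  · exact h2
  · rw [h2, last_add_one hm h1]

lemma htgO_inj' {m n ℓ : ℕ} (hm : 0 < m) {v v' w : ZMod m × ZMod n}
    (h : htgO m n ℓ v w) (h' : htgO m n ℓ v' w) : v = v' := by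
  have e : v.1 = v'.1 := add_right_cancel ((htgO_fst hm h).symm.trans (htgO_fst hm h'))
  rcases h with ⟨h1, h2, h3, h4⟩ | ⟨h1, h2, h3, h4⟩ <;>
  rcases h' with ⟨k1, k2, k3, k4⟩ | ⟨k1, k2, k3, k4⟩
  · exact Prod.ext e (h3.symm.trans k3)
  · exact absurd (e ▸ k1) h1
  · exact absurd (e ▸ h1) k1
  · exact Prod.ext e (add_right_cancel (h3.symm.trans k3))

/-- Cross edges. -/
def htgC (m n ℓ : ℕ) (v w : ZMod m × ZMod n) : Prop := htgO m n ℓ v w ∨ htgO m n ℓ w v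

lemma htgC_inj {m n ℓ : ℕ} (hm : 0 < m) (hn : 4 ≤ n) (hne : Even n) (hpar : ℓ % 2 = m % 2)
    {v w w' : ZMod m × ZMod n}
    (h : htgC m n ℓ w v) (h' : htgC m n ℓ v w') : w = w' := by
  rcases h with h | h <;> rcases h' with h' | h'
  · have := htgO_color hm hn hne hpar h
    have := htgO_color hm hn hne hpar h'
    omega
  · exact htgO_inj' hm h h'
  · exact htgO_inj h h'
  · have := htgO_color hm hn hne hpar h
    have := htgO_color hm hn hne hpar h'
    omega

lemma htg_adj {m n ℓ : ℕ} (hm : 0 < m) (hn : 4 ≤ n) (hne : Even n) (hpar : ℓ % 2 = m % 2)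
    (v w : ZMod m × ZMod n) : (HTG m n ℓ).Adj v w ↔ htgV m n v w ∨ htgC m n ℓ v w := by
  constructor
  · rintro ⟨-, h | h⟩
    · rcases h with h | h
      · exact Or.inl h
      · exact Or.inr (Or.inl h)
    · rcases h with h | h
      · exact Or.inl (htgV_symm h)
      · exact Or.inr (Or.inr h)
  · intro h
    refine ⟨?_, ?_⟩
    · rintro rfl
      rcases h with h | h | h
      · have := htgV_color hn hne h
        unfold htgc at this
        omega
      · have := htgO_color hm hn hne hpar h
        omega
      · have := htgO_color hm hn hne hpar h
        omega
    · rcases h with h | h | h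
      · exact Or.inl (Or.inl h)
      · exact Or.inl (Or.inr h)
      · exact Or.inr (Or.inr h)

lemma htg_color_ne {m n ℓ : ℕ} (hm : 0 < m) (hn : 4 ≤ n) (hne : Even n) (hpar : ℓ % 2 = m % 2)
    {v w : ZMod m × ZMod n} (h : (HTG m n ℓ).Adj v w) : htgc v ≠ htgc w := by
  rw [htg_adj hm hn hne hpar] at h
  rcases h with h | h | h
  · have := htgV_color hn hne h
    omega
  · have := htgO_color hm hn hne hpar h
    omega
  · have := htgO_color hm hn hne hpar h
    omega

/-- Girth four for a bipartite graph. -/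
lemma girth_four_iff {V : Type*} (Γ : SimpleGraph V) (c : V → ℕ)
    (hc2 : ∀ v, c v < 2) (hc : ∀ v w, Γ.Adj v w → c v ≠ c w) :
    Γ.girth = 4 ↔ ∃ a b c d, Γ.Adj a b ∧ Γ.Adj b c ∧ Γ.Adj c d ∧ Γ.Adj d a ∧ a ≠ c ∧ b ≠ d := by
  constructor
  · intro h
    have hna : ¬ Γ.IsAcyclic := by
      intro ha
      rw [SimpleGraph.girth_eq_zero.mpr ha] at h
      omega
    obtain ⟨a, w, hw, hl⟩ := SimpleGraph.exists_girth_eq_length.mpr hna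
    rw [h] at hl
    match w, hw, hl with
    | .cons h1 (.cons h2 (.cons h3 (.cons h4 .nil))), hw, _ =>
      have := hw.support_nodup
      simp at this
      exact ⟨_, _, _, _, h1, h2, h3, h4, by tauto, by tauto⟩
  · rintro ⟨a, b, c', d, h1, h2, h3, h4, h5, h6⟩
    let w : Γ.Walk a a := .cons h1 (.cons h2 (.cons h3 (.cons h4 .nil)))
    have n1 := h1.ne
    have n2 := h2.ne
    have n3 := h3.ne
    have n4 := h4.ne
    have hw : w.IsCycle := by
      rw [SimpleGraph.Walk.isCycle_def]
      simp only [w, SimpleGraph.Walk.isTrail_def]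
      simp
      grind
    have hle : Γ.girth ≤ 4 := hw.girth_le_length
    have hna : ¬ Γ.IsAcyclic := fun ha => ha w hw
    obtain ⟨x, u, hu, hl⟩ := SimpleGraph.exists_girth_eq_length.mpr hna
    have h3 := hu.three_le_length
    have hne3 : u.length ≠ 3 := by
      intro hl3
      match u, hl3 with
      | .cons h1 (.cons h2 (.cons h3 .nil)), _ =>
        have := hc _ _ h1
        have := hc _ _ h2
        have := hc _ _ h3
        grind
    omega

lemma dvd_small {n x : ℕ} (h : n ∣ x) (hx : x < 2 * n) : x = 0 ∨ x = n := by
  obtain ⟨k, rfl⟩ := h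
  have : k < 2 := by
    by_contra hk
    have : n * 2 ≤ n * k := Nat.mul_le_mul_left _ (by omega)
    omega
  interval_cases k <;> simp

lemma cast_zero_small {n x : ℕ} (h : ((x : ℕ) : ZMod n) = 0) (hx : x < 2 * n) :
    x = 0 ∨ x = n := dvd_small ((ZMod.natCast_eq_zero_iff _ _).mp h) hx

lemma cast_ne {n x y : ℕ} (hx : x < n) (hy : y < n) (h : x ≠ y) : (x : ZMod n) ≠ (y : ZMod n) := by
  intro e
  rw [ZMod.natCast_eq_natCast_iff'] at e
  rw [Nat.mod_eq_of_lt hx, Nat.mod_eq_of_lt hy] at e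
  exact h e

/-- Two consecutive vertical steps which do not backtrack have equal signs. -/
lemma htgV_two {m n : ℕ} {a b c : ZMod m × ZMod n} (h1 : htgV m n a b) (h2 : htgV m n b c)
    (h : a ≠ c) : (b.2 = a.2 + 1 ∧ c.2 = b.2 + 1) ∨ (b.2 = a.2 - 1 ∧ c.2 = b.2 - 1) := by
  obtain ⟨e1, h1 | h1⟩ := h1 <;> obtain ⟨e2, h2 | h2⟩ := h2
  · exact Or.inl ⟨h1, h2⟩
  · exact absurd (Prod.ext (e1.trans e2) (by rw [h2, h1]; ring)) h
  · exact absurd (Prod.ext (e1.trans e2) (by rw [h2, h1]; ring)) h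
  · exact Or.inr ⟨h1, h2⟩

/-- The list of exceptional parameters. -/
def htgExc (m n ℓ : ℕ) : Prop :=
      (n = 4) ∨
      (m = 1 ∧ 6 ≤ n ∧ ℓ = 3) ∨
      (m = 1 ∧ 6 ≤ n ∧ n % 4 = 2 ∧ 2 * ℓ = n) ∨
      (m = 1 ∧ 8 ≤ n ∧ n % 4 = 0 ∧ 2 * ℓ = n - 2) ∨
      (m = 2 ∧ 6 ≤ n ∧ (ℓ = 0 ∨ ℓ = 2))

/-- Four vertical edges. -/
lemma caseVVVV {m n : ℕ} (hn : 6 ≤ n) {a b c d : ZMod m × ZMod n}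
    (h1 : htgV m n a b) (h2 : htgV m n b c) (h3 : htgV m n c d) (h4 : htgV m n d a)
    (hac : a ≠ c) (hbd : b ≠ d) : False := by
  have e1 := htgV_two h1 h2 hac
  have e2 := htgV_two h2 h3 hbd
  have e3 := htgV_two h3 h4 hac.symm
  have e4 := htgV_two h4 h1 hbd.symm
  have h20 : (2 : ZMod n) ≠ 0 := by
    have := cast_ne (n := n) (x := 2) (y := 0) (by omega) (by omega) (by omega)
    simpa using this
  have h40 : (4 : ZMod n) ≠ 0 := by
    have := cast_ne (n := n) (x := 4) (y := 0) (by omega) (by omega) (by omega)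
    simpa using this
  have key : ∀ x y : ZMod n, y = x + 1 → y = x - 1 → False := by
    intro x y p q
    exact h20 (by linear_combination q - p)
  rcases e1 with ⟨p1, p2⟩ | ⟨p1, p2⟩
  · rcases e2 with ⟨q1, q2⟩ | ⟨q1, q2⟩
    · rcases e3 with ⟨r1, r2⟩ | ⟨r1, r2⟩
      · exact h40 (by linear_combination -(p1 + p2 + q2 + r2))
      · exact key _ _ q2 r1
    · exact key _ _ p2 q1
  · rcases e2 with ⟨q1, q2⟩ | ⟨q1, q2⟩
    · exact key _ _ q1 p2
    · rcases e3 with ⟨r1, r2⟩ | ⟨r1, r2⟩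
      · exact key _ _ r1 q2
      · exact h40 (by linear_combination (p1 + p2 + q2 + r2))

/-- One cross edge, three vertical ones, oriented. -/
lemma caseOVVV {m n ℓ : ℕ} (hm : 0 < m) (hn : 6 ≤ n) (hl : ℓ ≤ n / 2)
    {a b c d : ZMod m × ZMod n}
    (h1 : htgO m n ℓ a b) (h2 : htgV m n b c) (h3 : htgV m n c d) (h4 : htgV m n d a)
    (hac : a ≠ c) (hbd : b ≠ d) : htgExc m n ℓ := by
  have ef := htgO_fst hm h1
  have ee : b.1 = a.1 := h2.1.trans (h3.1.trans h4.1)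
  have h10 : (1 : ZMod m) = 0 := by
    rw [ee] at ef
    simpa using ef.symm
  have hm1 : m = 1 := by
    have : ((1 : ℕ) : ZMod m) = 0 := by simpa using h10
    have := (ZMod.natCast_eq_zero_iff _ _).mp this
    exact Nat.dvd_one.mp this
  subst hm1
  have h5 : b.2 = a.2 + (ℓ : ZMod n) := by
    rcases h1 with ⟨k1, -⟩ | ⟨-, -, k, -⟩
    · exact absurd (by have := ZMod.val_lt a.1; omega) k1
    · exact k
  have h20 : (2 : ZMod n) ≠ 0 := by
    have := cast_ne (n := n) (x := 2) (y := 0) (by omega) (by omega) (by omega)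
    simpa using this
  have key : ∀ x y : ZMod n, y = x + 1 → y = x - 1 → False := by
    intro x y p q
    exact h20 (by linear_combination q - p)
  have hl3 : ℓ = 3 := by
    rcases htgV_two h2 h3 hbd with ⟨p1, p2⟩ | ⟨p1, p2⟩ <;>
    rcases htgV_two h3 h4 hac.symm with ⟨q1, q2⟩ | ⟨q1, q2⟩
    · have : ((ℓ + 3 : ℕ) : ZMod n) = 0 := by
        push_cast
        linear_combination -(h5 + p1 + p2 + q2)
      have := cast_zero_small this (by omega)
      omega
    · exact (key _ _ p2 q1).elim
    · exact (key _ _ q1 p2).elim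
    · have : (ℓ : ZMod n) = ((3 : ℕ) : ZMod n) := by
        push_cast
        linear_combination -(h5 + p1 + p2 + q2)
      by_contra hne
      exact cast_ne (by omega) (by omega) hne this
  exact Or.inr (Or.inl ⟨rfl, hn, hl3⟩)

lemma caseCVVV {m n ℓ : ℕ} (hm : 0 < m) (hn : 6 ≤ n) (hl : ℓ ≤ n / 2)
    {a b c d : ZMod m × ZMod n}
    (h1 : htgC m n ℓ a b) (h2 : htgV m n b c) (h3 : htgV m n c d) (h4 : htgV m n d a)
    (hac : a ≠ c) (hbd : b ≠ d) : htgExc m n ℓ := by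
  rcases h1 with h1 | h1
  · exact caseOVVV hm hn hl h1 h2 h3 h4 hac hbd
  · exact caseOVVV hm hn hl h1 (htgV_symm h4) (htgV_symm h3) (htgV_symm h2) hbd hac

/-- Normal cross edge followed by wrap-around edge. -/
lemma case_mixed {m n ℓ : ℕ} (hm : 0 < m) (hn : 6 ≤ n) (hl : ℓ ≤ n / 2)
    {a b c d : ZMod m × ZMod n}
    (h1 : a.1.val ≠ m - 1 ∧ b.1 = a.1 + 1 ∧ b.2 = a.2)
    (h3 : c.1.val = m - 1 ∧ d.1 = 0 ∧ d.2 = c.2 + (ℓ : ZMod n))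
    (h2 : htgV m n b c) (h4 : htgV m n d a) : htgExc m n ℓ := by
  have : NeZero m := ⟨by omega⟩
  obtain ⟨p1, p2, p3⟩ := h1
  obtain ⟨q1, q2, q3⟩ := h3
  have ha0 : a.1 = 0 := by rw [← h4.1, q2]
  have hm2 : 2 ≤ m := by
    rw [ha0, ZMod.val_zero] at p1
    omega
  have hmm : m = 2 := by
    have : (((1 : ℕ)) : ZMod m).val = m - 1 := by
      rw [← q1, ← h2.1, p2, ha0]
      simp
    rw [ZMod.val_natCast, Nat.mod_eq_of_lt (by omega)] at this
    omega
  obtain ⟨-, h2⟩ := h2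
  obtain ⟨-, h4⟩ := h4
  have hll : ℓ = 0 ∨ ℓ = 2 := by
    rcases h2 with h2 | h2 <;> rcases h4 with h4 | h4
    · have : ((ℓ + 2 : ℕ) : ZMod n) = 0 := by
        push_cast
        linear_combination -(p3 + h2 + q3 + h4)
      have := cast_zero_small this (by omega)
      omega
    · have : ((ℓ : ℕ) : ZMod n) = 0 := by
        linear_combination -(p3 + h2 + q3 + h4)
      have := cast_zero_small this (by omega)
      omega
    · have : ((ℓ : ℕ) : ZMod n) = 0 := by
        linear_combination -(p3 + h2 + q3 + h4)
      have := cast_zero_small this (by omega)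
      omega
    · have : (ℓ : ZMod n) = ((2 : ℕ) : ZMod n) := by
        push_cast
        linear_combination -(p3 + h2 + q3 + h4)
      by_contra hne
      exact cast_ne (x := ℓ) (y := 2) (by omega) (by omega) (by omega) this
  exact Or.inr (Or.inr (Or.inr (Or.inr ⟨hmm, hn, hll⟩)))

lemma caseOVOV {m n ℓ : ℕ} (hm : 0 < m) (hn : 6 ≤ n) (hne : Even n) (hl : ℓ ≤ n / 2)
    (hpar : ℓ % 2 = m % 2) {a b c d : ZMod m × ZMod n}
    (h1 : htgO m n ℓ a b) (h2 : htgV m n b c) (h3 : htgO m n ℓ c d) (h4 : htgV m n d a)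
    (hac : a ≠ c) : htgExc m n ℓ := by
  have : NeZero m := ⟨by omega⟩
  have f1 := htgO_fst hm h1
  have f3 := htgO_fst hm h3
  rcases h1 with ⟨p1, p2, p3, p4⟩ | ⟨p1, p2, p3, p4⟩ <;>
  rcases h3 with ⟨q1, q2, q3, q4⟩ | ⟨q1, q2, q3, q4⟩
  · exfalso
    have h20 : ((2 : ℕ) : ZMod m) = 0 := by
      push_cast
      linear_combination h2.1 + h4.1 - f1 - f3
    have hd := (ZMod.natCast_eq_zero_iff _ _).mp h20
    have hm2 : m ≤ 2 := Nat.le_of_dvd (by omega) hd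
    have l1 := ZMod.val_lt a.1
    have l2 := ZMod.val_lt c.1
    have : a.1 = c.1 := ZMod.val_injective m (by omega)
    have hz : (1 : ZMod m) = 0 := by linear_combination h2.1 - f1 - this
    have hd : m ∣ 1 := (ZMod.natCast_eq_zero_iff _ _).mp (by simpa using hz)
    have : m = 1 := Nat.dvd_one.mp hd
    omega
  · exact case_mixed hm hn hl ⟨p1, p2, p3⟩ ⟨q1, q2, q3⟩ h2 h4
  · exact case_mixed hm hn hl ⟨q1, q2, q3⟩ ⟨p1, p2, p3⟩ h4 h2
  · have hm1 : m = 1 := by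
      rw [← h2.1, p2, ZMod.val_zero] at q1
      omega
    have e1 : a.1 = c.1 := by
      subst hm1
      exact Subsingleton.elim _ _
    obtain ⟨-, h2⟩ := h2
    obtain ⟨-, h4⟩ := h4
    obtain ⟨k, hk⟩ := hne
    rcases h2 with h2 | h2 <;> rcases h4 with h4 | h4
    · have : ((2 * ℓ + 2 : ℕ) : ZMod n) = 0 := by
        push_cast
        linear_combination -(p3 + h2 + q3 + h4)
      have := cast_zero_small this (by omega)
      have h2n : 2 * ℓ + 2 = n := by omega
      exact Or.inr (Or.inr (Or.inr (Or.inl ⟨hm1, by omega, by omega, by omega⟩)))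
    · have : ((2 * ℓ : ℕ) : ZMod n) = 0 := by
        push_cast
        linear_combination -(p3 + h2 + q3 + h4)
      have := cast_zero_small this (by omega)
      have h2n : 2 * ℓ = n := by omega
      exact Or.inr (Or.inr (Or.inl ⟨hm1, by omega, by omega, by omega⟩))
    · have : ((2 * ℓ : ℕ) : ZMod n) = 0 := by
        push_cast
        linear_combination -(p3 + h2 + q3 + h4)
      have := cast_zero_small this (by omega)
      have h2n : 2 * ℓ = n := by omega
      exact Or.inr (Or.inr (Or.inl ⟨hm1, by omega, by omega, by omega⟩))
    · have : ((2 * (ℓ - 1) : ℕ) : ZMod n) = 0 := by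
        rw [Nat.cast_mul, Nat.cast_sub (by omega)]
        push_cast
        linear_combination -(p3 + h2 + q3 + h4)
      have := cast_zero_small this (by omega)
      have hl1 : ℓ = 1 := by omega
      subst hl1
      exfalso
      apply hac
      apply Prod.ext e1
      rw [h2, p3]
      push_cast
      ring

lemma caseCVCV {m n ℓ : ℕ} (hm : 0 < m) (hn : 6 ≤ n) (hne : Even n) (hl : ℓ ≤ n / 2)
    (hpar : ℓ % 2 = m % 2) {a b c d : ZMod m × ZMod n}
    (h1 : htgC m n ℓ a b) (h2 : htgV m n b c) (h3 : htgC m n ℓ c d) (h4 : htgV m n d a)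
    (hac : a ≠ c) (hbd : b ≠ d) : htgExc m n ℓ := by
  have hn4 : 4 ≤ n := by omega
  have k := htgV_color hn4 hne h2
  rcases h1 with h1 | h1 <;> rcases h3 with h3 | h3
  · exact caseOVOV hm hn hne hl hpar h1 h2 h3 h4 hac
  · have := htgO_color hm hn4 hne hpar h1
    have := htgO_color hm hn4 hne hpar h3
    omega
  · have := htgO_color hm hn4 hne hpar h1
    have := htgO_color hm hn4 hne hpar h3
    omega
  · exact caseOVOV hm hn hne hl hpar h1 (htgV_symm h4) h3 (htgV_symm h2) hbd

lemma htg_forward {m n ℓ : ℕ} (hm : 0 < m) (hn : 4 ≤ n) (hne : Even n) (hl : ℓ ≤ n / 2)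
    (hpar : ℓ % 2 = m % 2) {a b c d : ZMod m × ZMod n}
    (h1 : (HTG m n ℓ).Adj a b) (h2 : (HTG m n ℓ).Adj b c) (h3 : (HTG m n ℓ).Adj c d)
    (h4 : (HTG m n ℓ).Adj d a) (hac : a ≠ c) (hbd : b ≠ d) : htgExc m n ℓ := by
  by_cases hn4 : n = 4
  · exact Or.inl hn4
  have hn6 : 6 ≤ n := by
    obtain ⟨k, hk⟩ := hne
    omega
  rw [htg_adj hm hn hne hpar] at h1 h2 h3 h4
  have inj := @htgC_inj m n ℓ hm hn hne hpar
  rcases h1 with h1 | h1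
  · rcases h2 with h2 | h2
    · rcases h3 with h3 | h3
      · rcases h4 with h4 | h4
        · exact (caseVVVV hn6 h1 h2 h3 h4 hac hbd).elim
        · exact caseCVVV hm hn6 hl h4 h1 h2 h3 hbd.symm hac
      · rcases h4 with h4 | h4
        · exact caseCVVV hm hn6 hl h3 h4 h1 h2 hac.symm hbd.symm
        · exact absurd (inj h3 h4) hac.symm
    · rcases h3 with h3 | h3
      · rcases h4 with h4 | h4
        · exact caseCVVV hm hn6 hl h2 h3 h4 h1 hbd hac.symm
        · exact caseCVCV hm hn6 hne hl hpar h2 h3 h4 h1 hbd hac.symm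
      · exact absurd (inj h2 h3) hbd
  · rcases h2 with h2 | h2
    · rcases h4 with h4 | h4
      · rcases h3 with h3 | h3
        · exact caseCVVV hm hn6 hl h1 h2 h3 h4 hac hbd
        · exact caseCVCV hm hn6 hne hl hpar h1 h2 h3 h4 hac hbd
      · exact absurd (inj h4 h1) hbd.symm
    · exact absurd (inj h1 h2) hac

lemma htgV_cast {m n : ℕ} (i : ZMod m) (j k : ℕ) (h : k = j + 1 ∨ j = k + 1) :
    htgV m n (i, (j : ZMod n)) (i, (k : ZMod n)) := by
  rcases h with rfl | rfl
  · exact ⟨rfl, Or.inl (by push_cast; rfl)⟩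
  · exact ⟨rfl, Or.inr (by push_cast; ring)⟩

lemma htgO_cast_one {n ℓ : ℕ} (hne : Even n) (j k : ℕ) (hj : j % 2 = 1)
    (h : ((j + ℓ : ℕ) : ZMod n) = (k : ZMod n)) :
    htgO 1 n ℓ (0, (j : ZMod n)) (0, (k : ZMod n)) := by
  refine Or.inr ⟨rfl, rfl, ?_, ?_⟩
  · simp only
    rw [← h]
    push_cast
    rfl
  · simp only
    rw [val_cast_par hne]
    exact hj

lemma pair_ne {m n : ℕ} (i i' : ZMod m) {x y : ℕ} (h : (x : ZMod n) ≠ (y : ZMod n)) :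
    ((i, (x : ZMod n)) : ZMod m × ZMod n) ≠ (i', (y : ZMod n)) := by
  intro e
  exact h (congrArg Prod.snd e)

lemma htg_backward {m n ℓ : ℕ} (hm : 0 < m) (hn : 4 ≤ n) (hne : Even n)
    (hl : ℓ ≤ n / 2) (hpar : ℓ % 2 = m % 2) (h : htgExc m n ℓ) :
    ∃ a b c d, (HTG m n ℓ).Adj a b ∧ (HTG m n ℓ).Adj b c ∧ (HTG m n ℓ).Adj c d ∧
      (HTG m n ℓ).Adj d a ∧ a ≠ c ∧ b ≠ d := by
  simp only [htg_adj hm hn hne hpar]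
  rcases h with rfl | ⟨rfl, h6, rfl⟩ | ⟨rfl, h6, h2, h3⟩ | ⟨rfl, h6, h2, h3⟩ | ⟨rfl, h6, h3⟩
  · refine ⟨(0, (0 : ℕ)), (0, (1 : ℕ)), (0, (2 : ℕ)), (0, (3 : ℕ)),
      Or.inl (htgV_cast _ _ _ (by omega)), Or.inl (htgV_cast _ _ _ (by omega)),
      Or.inl (htgV_cast _ _ _ (by omega)), Or.inl ⟨rfl, Or.inl ?_⟩,
      pair_ne _ _ (cast_ne (by omega) (by omega) (by omega)),
      pair_ne _ _ (cast_ne (by omega) (by omega) (by omega))⟩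
    show ((0 : ℕ) : ZMod 4) = ((3 : ℕ) : ZMod 4) + 1
    decide
  · exact ⟨(0, (1 : ℕ)), (0, (4 : ℕ)), (0, (3 : ℕ)), (0, (2 : ℕ)),
      Or.inr (Or.inl (htgO_cast_one hne _ _ (by omega) rfl)),
      Or.inl (htgV_cast _ _ _ (by omega)),
      Or.inl (htgV_cast _ _ _ (by omega)), Or.inl (htgV_cast _ _ _ (by omega)),
      pair_ne _ _ (cast_ne (by omega) (by omega) (by omega)),
      pair_ne _ _ (cast_ne (by omega) (by omega) (by omega))⟩
  · refine ⟨(0, (1 : ℕ)), (0, (1 + ℓ : ℕ)), (0, (2 + ℓ : ℕ)), (0, (2 : ℕ)),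
      Or.inr (Or.inl (htgO_cast_one hne _ _ (by omega) rfl)),
      Or.inl (htgV_cast _ _ _ (by omega)),
      Or.inr (Or.inl (htgO_cast_one hne _ _ (by omega) ?_)),
      Or.inl (htgV_cast _ _ _ (by omega)),
      pair_ne _ _ (cast_ne (by omega) (by omega) (by omega)),
      pair_ne _ _ (cast_ne (by omega) (by omega) (by omega))⟩
    rw [show 2 + ℓ + ℓ = 2 + n by omega]
    simp
  · refine ⟨(0, (1 : ℕ)), (0, (1 + ℓ : ℕ)), (0, (2 + ℓ : ℕ)), (0, (0 : ℕ)),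
      Or.inr (Or.inl (htgO_cast_one hne _ _ (by omega) rfl)),
      Or.inl (htgV_cast _ _ _ (by omega)),
      Or.inr (Or.inl (htgO_cast_one hne _ _ (by omega) ?_)),
      Or.inl (htgV_cast _ _ _ (by omega)),
      pair_ne _ _ (cast_ne (by omega) (by omega) (by omega)),
      pair_ne _ _ (cast_ne (by omega) (by omega) (by omega))⟩
    rw [show 2 + ℓ + ℓ = n by omega]
    simp
  · have hO1 : htgO 2 n ℓ (0, ((1 : ℕ) : ZMod n)) (1, ((1 : ℕ) : ZMod n)) := by
      refine Or.inl ⟨show (0 : ZMod 2).val ≠ 2 - 1 by decide,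
        show (1 : ZMod 2) = 0 + 1 by decide, rfl, ?_⟩
      simp only
      rw [val_cast_par hne]
      decide
    have hO2 : ∀ j k : ℕ, j % 2 = 0 → k = j + ℓ →
        htgO 2 n ℓ (1, (j : ZMod n)) (0, (k : ZMod n)) := by
      intro j k hj hk
      refine Or.inr ⟨show (1 : ZMod 2).val = 2 - 1 by decide, rfl, ?_, ?_⟩
      · simp only
        rw [hk]
        push_cast
        rfl
      · simp only
        rw [val_cast_par hne]
        omega
    rcases h3 with rfl | rfl
    · exact ⟨(0, (1 : ℕ)), (1, (1 : ℕ)), (1, (2 : ℕ)), (0, (2 : ℕ)),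
        Or.inr (Or.inl hO1), Or.inl (htgV_cast _ _ _ (by omega)),
        Or.inr (Or.inl (hO2 _ _ (by omega) (by omega))), Or.inl (htgV_cast _ _ _ (by omega)),
        pair_ne _ _ (cast_ne (by omega) (by omega) (by omega)),
        pair_ne _ _ (cast_ne (by omega) (by omega) (by omega))⟩
    · exact ⟨(0, (1 : ℕ)), (1, (1 : ℕ)), (1, (0 : ℕ)), (0, (2 : ℕ)),
        Or.inr (Or.inl hO1), Or.inl (htgV_cast _ _ _ (by omega)),
        Or.inr (Or.inl (hO2 _ _ (by omega) (by omega))), Or.inl (htgV_cast _ _ _ (by omega)),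
        pair_ne _ _ (cast_ne (by omega) (by omega) (by omega)),
        pair_ne _ _ (cast_ne (by omega) (by omega) (by omega))⟩

/-- **Proposition 5.3 (Alspach).** `HTG(m,n,ℓ)` has girth `4` iff one of (i)–(v) holds. -/
theorem statement15 (m n ℓ : ℕ) (hm : 0 < m) (hn : 4 ≤ n) (hne : Even n)
    (hl : ℓ ≤ n / 2) (hpar : ℓ % 2 = m % 2) :
    (HTG m n ℓ).girth = 4 ↔
      (n = 4) ∨
      (m = 1 ∧ 6 ≤ n ∧ ℓ = 3) ∨
      (m = 1 ∧ 6 ≤ n ∧ n % 4 = 2 ∧ 2 * ℓ = n) ∨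
      (m = 1 ∧ 8 ≤ n ∧ n % 4 = 0 ∧ 2 * ℓ = n - 2) ∨
      (m = 2 ∧ 6 ≤ n ∧ (ℓ = 0 ∨ ℓ = 2)) := by
  rw [girth_four_iff (HTG m n ℓ) htgc (fun v => Nat.mod_lt _ (by norm_num))
    (fun v w h => htg_color_ne hm hn hne hpar h)]
  constructor
  · rintro ⟨a, b, c, d, h1, h2, h3, h4, h5, h6⟩
    exact htg_forward hm hn hne hl hpar h1 h2 h3 h4 h5 h6
  · intro h
    exact htg_backward hm hn hne hl hpar h

end HTGPaper
end

section
/- Let m and n be positive integers with n ≥ 4 even, and let 0 ≤ ℓ ≤ n−1 be an integer of the same parity as m, with ℓ ≥ 1 so that n−ℓ ≤ n−1. Then the honeycomb toroidal graphs HTG(m,n,ℓ) and HTG(m,n,n−ℓ) are isomorphic. -/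
namespace HTGPaper

theorem neg_val_parity (n : ℕ) (hn : 4 ≤ n) (hne : Even n) (j : ZMod n) :
    (-j).val % 2 = j.val % 2 := by
  haveI : NeZero n := ⟨by omega⟩
  rw [ZMod.neg_val]
  have := ZMod.val_lt j
  obtain ⟨k, hk⟩ := hne
  split_ifs with h
  · simp [h]
  · omega

theorem neg_rel_iff (n ℓ : ℕ) (hl : ℓ ≤ n) (a b : ZMod n) :
    -b = -a + ((n - ℓ : ℕ) : ZMod n) ↔ b = a + (ℓ : ZMod n) := by
  rw [Nat.cast_sub hl, ZMod.natCast_self]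
  constructor <;> intro h
  · rw [← neg_neg b, h]; ring
  · rw [h]; ring

theorem neg_step_iff (n : ℕ) (a b : ZMod n) :
    (-b = -a + 1 ∨ -b = -a - 1) ↔ (b = a + 1 ∨ b = a - 1) := by
  have h1 : -b = -a + 1 ↔ b = a - 1 := by
    rw [← neg_inj (a := b)]; ring_nf
  have h2 : -b = -a - 1 ↔ b = a + 1 := by
    rw [← neg_inj (a := b)]; ring_nf
  rw [h1, h2, or_comm]

/-- `HTG(m,n,ℓ)` and `HTG(m,n,n-ℓ)` are isomorphic. -/
theorem statement16 (m n ℓ : ℕ) (hm : 0 < m) (hn : 4 ≤ n) (hne : Even n)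
    (hl : ℓ ≤ n - 1) (hl1 : 1 ≤ ℓ) (hpar : ℓ % 2 = m % 2) :
    Nonempty (HTG m n ℓ ≃g HTG m n (n - ℓ)) := by
  refine ⟨⟨Equiv.prodCongr (Equiv.refl _) (Equiv.neg _), ?_⟩⟩
  rintro ⟨a, b⟩ ⟨c, d⟩
  have hl' : ℓ ≤ n := by omega
  simp only [HTG, SimpleGraph.fromRel_adj, Equiv.prodCongr_apply, Prod.map_apply,
    Equiv.refl_apply, Equiv.neg_apply, neg_val_parity n hn hne, neg_rel_iff n ℓ hl',
    neg_step_iff, neg_inj, ne_eq, Prod.mk.injEq]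

end HTGPaper
end

section
/- The following isomorphisms with generalized prisms hold: (i) for each integer m ≥ 2 and each ℓ ∈ {0, 1, 2} of the same parity as m, HTG(m,4,ℓ) is isomorphic to GPr(m); (ii) for each integer n ≥ 8 with n ≡ 0 (mod 4), HTG(1,n,(n−2)/2) is isomorphic to GPr(n/4); (iii) for each even integer n ≥ 6, HTG(2,n,2) is isomorphic to GPr(n/2). -/
namespace HTGPaper

lemma eq_add_nat_iff {N : ℕ} [NeZero N] (x y : ZMod N) (l : ℕ) (hl : l < N) :
    y = x + (l : ZMod N) ↔ (y.val = x.val + l ∨ y.val + N = x.val + l) := by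
  have hx := ZMod.val_lt x
  have hy := ZMod.val_lt y
  rw [← (ZMod.val_injective N).eq_iff, ZMod.val_add, ZMod.val_cast_of_lt hl]
  by_cases h : x.val + l < N
  · rw [Nat.mod_eq_of_lt h]; omega
  · rw [Nat.mod_eq_sub_mod (by omega), Nat.mod_eq_of_lt (by omega)]; omega

lemma eq_add_one_iff' {N : ℕ} [NeZero N] (hN : 1 < N) (x y : ZMod N) :
    y = x + 1 ↔ (y.val = x.val + 1 ∨ y.val + N = x.val + 1) := by
  have := eq_add_nat_iff x y 1 hN
  simpa using this

lemma eq_sub_one_iff' {N : ℕ} [NeZero N] (hN : 1 < N) (x y : ZMod N) :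
    y = x - 1 ↔ (x.val = y.val + 1 ∨ x.val + N = y.val + 1) := by
  rw [← eq_add_one_iff' hN y x, eq_sub_iff_add_eq, eq_comm]

/-- Adjacency relation of the honeycomb toroidal graph on representatives. -/
def RH (m n l i j i' j' : ℕ) : Prop :=
  (i = i' ∧ ((j' = j + 1 ∨ j' + n = j + 1) ∨ (j = j' + 1 ∨ j + n = j' + 1))) ∨
  (i + 1 ≠ m ∧ i' = i + 1 ∧ j' = j ∧ i % 2 ≠ j % 2) ∨
  (i + 1 = m ∧ i' = 0 ∧ (j' = j + l ∨ j' + n = j + l) ∧ j % 2 = m % 2)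

/-- Adjacency relation of the generalized prism on representatives. -/
def RG (k i j i' j' : ℕ) : Prop :=
  (i = i' ∧ ((j' = j + 1 ∨ j' + 2 * k = j + 1) ∨ (j = j' + 1 ∨ j + 2 * k = j' + 1))) ∨
  (j % 2 = 0 ∧ i ≠ i' ∧ (j' = j + 1 ∨ j' + 2 * k = j + 1))

lemma HTG_adj {m n l : ℕ} [NeZero m] [NeZero n] (hn : 1 < n) (hl : l < n)
    (v w : ZMod m × ZMod n) :
    (HTG m n l).Adj v w ↔ v ≠ w ∧ (RH m n l v.1.val v.2.val w.1.val w.2.val ∨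
      RH m n l w.1.val w.2.val v.1.val v.2.val) := by
  have key : ∀ v w : ZMod m × ZMod n,
    ((v.1 = w.1 ∧ (w.2 = v.2 + 1 ∨ w.2 = v.2 - 1)) ∨
    (v.1.val ≠ m - 1 ∧ w.1 = v.1 + 1 ∧ w.2 = v.2 ∧ v.1.val % 2 ≠ v.2.val % 2) ∨
    (v.1.val = m - 1 ∧ w.1 = 0 ∧ w.2 = v.2 + (l : ZMod n) ∧ v.2.val % 2 = m % 2)) ↔
      RH m n l v.1.val v.2.val w.1.val w.2.val := by
    rintro ⟨a, b⟩ ⟨c, d⟩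
    have ha := ZMod.val_lt a
    have hc := ZMod.val_lt c
    have h1 : a = c ↔ a.val = c.val := (ZMod.val_injective m).eq_iff.symm
    have h2 : d = b ↔ d.val = b.val := (ZMod.val_injective n).eq_iff.symm
    have h3 : c = 0 ↔ c.val = 0 := (ZMod.val_eq_zero c).symm
    have h4 : (a.val ≠ m - 1 ∧ c = a + 1 ∧ d.val = b.val ∧ a.val % 2 ≠ b.val % 2) ↔
        (a.val + 1 ≠ m ∧ c.val = a.val + 1 ∧ d.val = b.val ∧ a.val % 2 ≠ b.val % 2) := by
      by_cases hm : a.val + 1 = m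
      · have : a.val = m - 1 := by omega
        exact ⟨fun h => absurd this h.1, fun h => absurd hm h.1⟩
      · rw [eq_add_one_iff' (by omega)]
        omega
    have h5 : a.val = m - 1 ↔ a.val + 1 = m := by omega
    unfold RH
    simp only [eq_add_nat_iff b d l hl, eq_add_one_iff' hn b d, eq_sub_one_iff' hn b d, h2]
    rw [h4, h1, h3, h5]
  unfold HTG
  rw [SimpleGraph.fromRel_adj, key v w, key w v]

lemma GPr_adj {k : ℕ} (hk : 0 < k) (v w : ZMod 2 × ZMod (2 * k)) :
    (GPr k).Adj v w ↔ v ≠ w ∧ (RG k v.1.val v.2.val w.1.val w.2.val ∨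
      RG k w.1.val w.2.val v.1.val v.2.val) := by
  have : NeZero (2 * k) := ⟨by omega⟩
  have key : ∀ v w : ZMod 2 × ZMod (2 * k),
    ((v.1 = w.1 ∧ (w.2 = v.2 + 1 ∨ w.2 = v.2 - 1)) ∨
    (Even v.2.val ∧ w.1 = v.1 + 1 ∧ w.2 = v.2 + 1)) ↔
      RG k v.1.val v.2.val w.1.val w.2.val := by
    rintro ⟨a, b⟩ ⟨c, d⟩
    have h1 : a = c ↔ a.val = c.val := (ZMod.val_injective 2).eq_iff.symm
    have h2 : c = a + 1 ↔ a.val ≠ c.val := by revert a c; decide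
    unfold RG
    simp only [eq_add_one_iff' (show 1 < 2 * k by omega) b d,
      eq_sub_one_iff' (show 1 < 2 * k by omega) b d, Nat.even_iff]
    rw [h2, h1]
  unfold GPr
  rw [SimpleGraph.fromRel_adj, key v w, key w v]

lemma main_iso {m n l k : ℕ} (hm : 0 < m) (hn : 1 < n) (hl : l < n) (hk : 0 < k)
    (hcard : m * n = 2 * (2 * k)) (B C : ℕ → ℕ → ℕ)
    (hB : ∀ i j, i < m → j < n → B i j < 2) (hC : ∀ i j, i < m → j < n → C i j < 2 * k)
    (hinj : ∀ i j i' j', i < m → j < n → i' < m → j' < n → B i j = B i' j' → C i j = C i' j' →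
      i = i' ∧ j = j')
    (h1 : ∀ i j i' j', i < m → j < n → i' < m → j' < n → RH m n l i j i' j' →
      RG k (B i j) (C i j) (B i' j') (C i' j') ∨ RG k (B i' j') (C i' j') (B i j) (C i j))
    (h2 : ∀ i j i' j', i < m → j < n → i' < m → j' < n →
      RG k (B i j) (C i j) (B i' j') (C i' j') →
      RH m n l i j i' j' ∨ RH m n l i' j' i j) :
    Nonempty (HTG m n l ≃g GPr k) := by
  have : NeZero m := ⟨by omega⟩
  have : NeZero n := ⟨by omega⟩
  have : NeZero (2 * k) := ⟨by omega⟩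
  let f : ZMod m × ZMod n → ZMod 2 × ZMod (2 * k) := fun v =>
    ((B v.1.val v.2.val : ℕ), (C v.1.val v.2.val : ℕ))
  have f1 : ∀ v, (f v).1.val = B v.1.val v.2.val := fun v =>
    ZMod.val_cast_of_lt (hB _ _ (ZMod.val_lt _) (ZMod.val_lt _))
  have f2 : ∀ v, (f v).2.val = C v.1.val v.2.val := fun v =>
    ZMod.val_cast_of_lt (hC _ _ (ZMod.val_lt _) (ZMod.val_lt _))
  have fi : Function.Injective f := by
    intro v w h
    have e1 : B v.1.val v.2.val = B w.1.val w.2.val := by rw [← f1, ← f1, h]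
    have e2 : C v.1.val v.2.val = C w.1.val w.2.val := by rw [← f2, ← f2, h]
    obtain ⟨a, b⟩ := hinj _ _ _ _ (ZMod.val_lt _) (ZMod.val_lt _) (ZMod.val_lt _) (ZMod.val_lt _)
      e1 e2
    exact Prod.ext (ZMod.val_injective _ a) (ZMod.val_injective _ b)
  have fb : Function.Bijective f := by
    rw [Fintype.bijective_iff_injective_and_card]
    refine ⟨fi, ?_⟩
    simp only [Fintype.card_prod, ZMod.card]
    exact hcard
  refine ⟨⟨Equiv.ofBijective f fb, ?_⟩⟩
  intro v w
  rw [Equiv.ofBijective_apply, Equiv.ofBijective_apply, GPr_adj hk, HTG_adj hn hl, fi.ne_iff,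
    f1, f1, f2, f2]
  have hv1 := ZMod.val_lt v.1
  have hv2 := ZMod.val_lt v.2
  have hw1 := ZMod.val_lt w.1
  have hw2 := ZMod.val_lt w.2
  refine and_congr_right fun _ => ⟨?_, ?_⟩
  · rintro (h | h)
    · exact h2 _ _ _ _ hv1 hv2 hw1 hw2 h
    · exact (h2 _ _ _ _ hw1 hw2 hv1 hv2 h).symm
  · rintro (h | h)
    · exact h1 _ _ _ _ hv1 hv2 hw1 hw2 h
    · exact (h1 _ _ _ _ hw1 hw2 hv1 hv2 h).symm

/-- One-directional version of `RH`. -/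
def QH (m n l i j i' j' : ℕ) : Prop :=
  (i = i' ∧ (j' = j + 1 ∨ j' + n = j + 1)) ∨
  (i + 1 ≠ m ∧ i' = i + 1 ∧ j' = j ∧ i % 2 ≠ j % 2) ∨
  (i + 1 = m ∧ i' = 0 ∧ (j' = j + l ∨ j' + n = j + l) ∧ j % 2 = m % 2)

/-- One-directional version of `RG`. -/
def QG (k i j i' j' : ℕ) : Prop :=
  (j' = j + 1 ∨ j' + 2 * k = j + 1) ∧ (i = i' ∨ j % 2 = 0)

lemma QH_of_RH {m n l i j i' j' : ℕ} (h : RH m n l i j i' j') :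
    QH m n l i j i' j' ∨ QH m n l i' j' i j := by
  rcases h with ⟨h, h' | h'⟩ | h | h
  · exact Or.inl (Or.inl ⟨h, h'⟩)
  · exact Or.inr (Or.inl ⟨h.symm, h'⟩)
  · exact Or.inl (Or.inr (Or.inl h))
  · exact Or.inl (Or.inr (Or.inr h))

lemma RH_of_QH {m n l i j i' j' : ℕ} (h : QH m n l i j i' j') : RH m n l i j i' j' := by
  rcases h with ⟨h, h'⟩ | h | h
  · exact Or.inl ⟨h, Or.inl h'⟩
  · exact Or.inr (Or.inl h)
  · exact Or.inr (Or.inr h)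

lemma QG_of_RG {k i j i' j' : ℕ} (h : RG k i j i' j') : QG k i j i' j' ∨ QG k i' j' i j := by
  rcases h with ⟨h, h' | h'⟩ | ⟨h, _, h'⟩
  · exact Or.inl ⟨h', Or.inl h⟩
  · exact Or.inr ⟨h', Or.inl h.symm⟩
  · exact Or.inl ⟨h', Or.inr h⟩

lemma RG_of_QG {k i j i' j' : ℕ} (h : QG k i j i' j') : RG k i j i' j' := by
  obtain ⟨h', h⟩ := h
  by_cases e : i = i'
  · exact Or.inl ⟨e, Or.inl h'⟩
  · exact Or.inr ⟨h.resolve_left e, e, h'⟩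

lemma main_iso' {m n l k : ℕ} (hm : 0 < m) (hn : 1 < n) (hl : l < n) (hk : 0 < k)
    (hcard : m * n = 2 * (2 * k)) (B C : ℕ → ℕ → ℕ)
    (hB : ∀ i j, i < m → j < n → B i j < 2) (hC : ∀ i j, i < m → j < n → C i j < 2 * k)
    (hinj : ∀ i j i' j', i < m → j < n → i' < m → j' < n → B i j = B i' j' → C i j = C i' j' →
      i = i' ∧ j = j')
    (h1 : ∀ i j i' j', i < m → j < n → i' < m → j' < n → QH m n l i j i' j' →
      QG k (B i j) (C i j) (B i' j') (C i' j') ∨ QG k (B i' j') (C i' j') (B i j) (C i j))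
    (h2 : ∀ i j i' j', i < m → j < n → i' < m → j' < n →
      QG k (B i j) (C i j) (B i' j') (C i' j') →
      QH m n l i j i' j' ∨ QH m n l i' j' i j) :
    Nonempty (HTG m n l ≃g GPr k) := by
  refine main_iso hm hn hl hk hcard B C hB hC hinj ?_ ?_
  · intro i j i' j' a b a' b' h
    rcases QH_of_RH h with h | h
    · exact (h1 _ _ _ _ a b a' b' h).imp RG_of_QG RG_of_QG
    · exact (h1 _ _ _ _ a' b' a b h).symm.imp RG_of_QG RG_of_QG
  · intro i j i' j' a b a' b' h
    rcases QG_of_RG h with h | h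
    · exact (h2 _ _ _ _ a b a' b' h).imp RH_of_QH RH_of_QH
    · exact (h2 _ _ _ _ a' b' a b h).symm.imp RH_of_QH RH_of_QH

lemma part_three (k : ℕ) (hk : 3 ≤ k) : Nonempty (HTG 2 (2 * k) 2 ≃g GPr k) := by
  let C : ℕ → ℕ → ℕ := fun i j => if i = 0 then (if j = 0 then 2 * k - 1 else j - 1) else j
  have hC : ∀ i j, (i = 0 ∧ j = 0 ∧ C i j + 1 = 2 * k) ∨ (i = 0 ∧ j = C i j + 1) ∨
      (i ≠ 0 ∧ C i j = j) := by
    intro i j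
    simp only [C]
    split_ifs <;> omega
  refine main_iso' (by omega) (by omega) (by omega) (by omega) (by ring) (fun i _ => i) C
    ?_ ?_ ?_ ?_ ?_
  · intros; assumption
  · intro i j _ _
    have := hC i j
    omega
  · intro i j i' j' _ _ _ _ _ _
    have := hC i j
    have := hC i' j'
    omega
  · intro i j i' j' _ _ _ _ h
    have h1 := hC i j
    have h2 := hC i' j'
    generalize C i j = c at *
    generalize C i' j' = c' at *
    clear hC C
    rcases h with ⟨e, h⟩ | ⟨e, e', e'', h⟩ | ⟨e, e', h, h'⟩
    · exact Or.inl ⟨by omega, Or.inl e⟩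
    · exact Or.inl ⟨by omega, Or.inr (by omega)⟩
    · exact Or.inl ⟨by omega, Or.inr (by omega)⟩
  · intro i j i' j' _ _ _ _ h
    have h1 := hC i j
    have h2 := hC i' j'
    generalize C i j = c at *
    generalize C i' j' = c' at *
    clear hC C
    obtain ⟨h, h'⟩ := h
    by_cases e : i = i'
    · exact Or.inl (Or.inl ⟨e, by omega⟩)
    · by_cases e0 : i = 0
      · exact Or.inl (Or.inr (Or.inl ⟨by omega, by omega, by omega, by omega⟩))
      · exact Or.inl (Or.inr (Or.inr ⟨by omega, by omega, by omega, by omega⟩))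

lemma part_two (k : ℕ) (hk : 2 ≤ k) : Nonempty (HTG 1 (4 * k) (2 * k - 1) ≃g GPr k) := by
  let C : ℕ → ℕ → ℕ := fun _ j => if j < 2 * k then j else j - 2 * k
  let B : ℕ → ℕ → ℕ := fun _ j =>
    if j + 1 = 2 * k then 1 else if j + 1 = 4 * k then 0 else if j < 2 * k then 0 else 1
  have hC : ∀ i j, (j + 1 = 2 * k ∧ C i j = j ∧ B i j = 1) ∨
      (j + 1 = 4 * k ∧ j = C i j + 2 * k ∧ B i j = 0) ∨
      (j + 1 < 2 * k ∧ C i j = j ∧ B i j = 0) ∨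
      (2 * k ≤ j ∧ j + 1 ≠ 4 * k ∧ j = C i j + 2 * k ∧ B i j = 1) := by
    intro i j
    simp only [C, B]
    split_ifs <;> omega
  refine main_iso' (by omega) (by omega) (by omega) (by omega) (by ring) B C
    ?_ ?_ ?_ ?_ ?_
  · intro i j _ _
    have := hC i j
    omega
  · intro i j _ _
    have := hC i j
    omega
  · intro i j i' j' _ _ _ _ _ _
    have := hC i j
    have := hC i' j'
    omega
  · intro i j i' j' _ _ _ _ h
    have h1 := hC i j
    have h2 := hC i' j'
    generalize C i j = c at *
    generalize C i' j' = c' at *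
    generalize B i j = b at *
    generalize B i' j' = b' at *
    clear hC C B
    rcases h with ⟨e, h⟩ | ⟨e, e', e'', h⟩ | ⟨e, e', h, h'⟩
    · exact Or.inl ⟨by omega, by omega⟩
    · omega
    · exact Or.inr ⟨Or.inl (by omega), Or.inr (by omega)⟩
  · intro i j i' j' _ _ _ _ h
    have h1 := hC i j
    have h2 := hC i' j'
    generalize C i j = c at *
    generalize C i' j' = c' at *
    generalize B i j = b at *
    generalize B i' j' = b' at *
    clear hC C B
    obtain ⟨h, h'⟩ := h
    by_cases e : j' = j + 1 ∨ j' + 4 * k = j + 1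
    · exact Or.inl (Or.inl ⟨by omega, e⟩)
    · exact Or.inr (Or.inr (Or.inr ⟨by omega, by omega, by omega, by omega⟩))

lemma part_one (m l : ℕ) (hm : 2 ≤ m) (hl : l < 3) (hlm : l % 2 = m % 2) :
    Nonempty (HTG m 4 l ≃g GPr m) := by
  let C : ℕ → ℕ → ℕ := fun i j => 2 * i + (i + j) % 2
  let B : ℕ → ℕ → ℕ := fun i j =>
    if i + 1 = m ∧ (i + j) % 2 = 1 then ((j + l) % 4) / 2 else j / 2
  have hC : ∀ i j, C i j = 2 * i + (i + j) % 2 := fun _ _ => rfl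
  have hB1 : ∀ i j, i + 1 = m → (i + j) % 2 = 1 → B i j = ((j + l) % 4) / 2 := by
    intro i j h h'
    exact if_pos ⟨h, h'⟩
  have hB2 : ∀ i j, (i + j) % 2 = 0 → B i j = j / 2 := by
    intro i j h
    exact if_neg (by omega)
  have hB3 : ∀ i j, i + 1 ≠ m → B i j = j / 2 := by
    intro i j h
    exact if_neg (by omega)
  clear_value B C
  refine main_iso' (by omega) (by omega) (by omega) (by omega) (by ring) B C
    ?_ ?_ ?_ ?_ ?_
  · intro i j _ _
    have := hB1 i j
    have := hB2 i j
    have := hB3 i j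
    omega
  · intro i j _ _
    have := hC i j
    omega
  · intro i j i' j' _ _ _ _ b c
    have := hC i j
    have := hC i' j'
    have e : i = i' := by omega
    subst e
    refine ⟨rfl, ?_⟩
    have e : j % 2 = j' % 2 := by omega
    rcases Nat.mod_two_eq_zero_or_one (i + j) with h | h
    · rw [hB2 i j h, hB2 i j' (by omega)] at b
      omega
    · by_cases h' : i + 1 = m
      · rw [hB1 i j h' h, hB1 i j' h' (by omega)] at b
        omega
      · rw [hB3 i j h', hB3 i j' h'] at b
        omega
  · intro i j i' j' _ _ _ _ h
    have c1 := hC i j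
    have c2 := hC i' j'
    rcases h with ⟨e, h⟩ | ⟨e, e', e'', h⟩ | ⟨e, e', h, h'⟩
    · by_cases p : (i + j) % 2 = 0
      · exact Or.inl ⟨Or.inl (by omega), Or.inr (by omega)⟩
      · exact Or.inr ⟨Or.inl (by omega), Or.inr (by omega)⟩
    · refine Or.inl ⟨Or.inl (by omega), Or.inl ?_⟩
      rw [hB3 i j e, hB2 i' j' (by omega), e'']
    · refine Or.inl ⟨Or.inr (by omega), Or.inl ?_⟩
      rw [hB1 i j e (by omega), hB2 i' j' (by omega)]
      omega
  · intro i j i' j' _ _ _ _ h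
    have c1 := hC i j
    have c2 := hC i' j'
    obtain ⟨h, h'⟩ := h
    by_cases p : C i j % 2 = 0
    · have e : i = i' := by omega
      have p' : j % 2 ≠ j' % 2 := by omega
      by_cases q : j' = j + 1 ∨ j' + 4 = j + 1
      · exact Or.inl (Or.inl ⟨e, q⟩)
      · exact Or.inr (Or.inl ⟨e.symm, by omega⟩)
    · have b : B i j = B i' j' := by omega
      rw [hB2 i' j' (by omega)] at b
      by_cases q : i + 1 = m
      · rw [hB1 i j q (by omega)] at b
        exact Or.inl (Or.inr (Or.inr ⟨q, by omega, by omega, by omega⟩))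
      · rw [hB3 i j q] at b
        exact Or.inl (Or.inr (Or.inl ⟨q, by omega, by omega, by omega⟩))

/-- Isomorphisms of girth-4 honeycomb toroidal graphs with generalized prisms:
(i) `HTG(m,4,ℓ) ≅ GPr(m)` for `m ≥ 2` and `ℓ ∈ {0,1,2}` of the same parity as `m`;
(ii) `HTG(1,n,(n-2)/2) ≅ GPr(n/4)` for `n ≥ 8`, `n ≡ 0 (mod 4)`;
(iii) `HTG(2,n,2) ≅ GPr(n/2)` for even `n ≥ 6`. -/
theorem statement17 :
    (∀ m ℓ : ℕ, 2 ≤ m → (ℓ = 0 ∨ ℓ = 1 ∨ ℓ = 2) → ℓ % 2 = m % 2 →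
      Nonempty (HTG m 4 ℓ ≃g GPr m)) ∧
    (∀ n : ℕ, 8 ≤ n → n % 4 = 0 →
      Nonempty (HTG 1 n ((n - 2) / 2) ≃g GPr (n / 4))) ∧
    (∀ n : ℕ, 6 ≤ n → Even n →
      Nonempty (HTG 2 n 2 ≃g GPr (n / 2))) := by
  refine ⟨?_, ?_, ?_⟩
  · intro m l hm hl hlm
    exact part_one m l hm (by omega) hlm
  · intro n hn h4
    obtain ⟨k, rfl⟩ : ∃ k, n = 4 * k := ⟨n / 4, by omega⟩
    rw [show (4 * k - 2) / 2 = 2 * k - 1 by omega, show 4 * k / 4 = k by omega]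
    exact part_two k (by omega)
  · intro n hn he
    obtain ⟨k, rfl⟩ : ∃ k, n = 2 * k := ⟨n / 2, by have := Nat.even_iff.mp he; omega⟩
    rw [show 2 * k / 2 = k by omega]
    exact part_three k (by omega)

end HTGPaper
end

section
/- The following isomorphisms hold: (i) for each even integer n ≥ 6, the graphs HTG(2,n,0) and HTG(1,2n,3) are both isomorphic to the prism graph Pr(n) = Cay(Z_2 × Z_n; {(1,0), (0,±1)}); (ii) for each odd integer n ≥ 3, the graphs HTG(1,2n,n) and HTG(1,2n,3) are both isomorphic to the Möbius ladder Ml(n) = Cay(Z_{2n}; {±1, n}). -/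
namespace HTGPaper

/-- The prism graph `Pr(n) = Cay(ℤ₂ × ℤₙ; {(1,0),(0,±1)})`. -/
def prismGraph (n : ℕ) : SimpleGraph (ZMod 2 × ZMod n) :=
  addCayley (ZMod 2 × ZMod n) {((1 : ZMod 2), (0 : ZMod n)), (0, 1), (0, -1)}

/-- The Möbius ladder `Ml(n) = Cay(ℤ₂ₙ; {±1, n})`. -/
def mobiusLadder (n : ℕ) : SimpleGraph (ZMod (2 * n)) :=
  addCayley (ZMod (2 * n)) {(1 : ZMod (2 * n)), -1, (n : ZMod (2 * n))}

theorem zadd {N : ℕ} [NeZero N] (u v : ZMod N) (c : ℕ) (hc : c ≤ N) :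
    v = u + (c : ZMod N) ↔ v.val = u.val + c ∨ v.val + N = u.val + c := by
  have hu := ZMod.val_lt u
  have hv := ZMod.val_lt v
  constructor
  · intro h
    have h2 : ((v.val : ℕ) : ZMod N) = ((u.val + c : ℕ) : ZMod N) := by
      simp [h]
    rw [ZMod.natCast_eq_natCast_iff] at h2
    rcases le_total v.val (u.val + c) with hle | hle
    · obtain ⟨k, hk⟩ := (Nat.modEq_iff_dvd' hle).1 h2
      have hk2 : k < 2 := by
        by_contra hk2
        have : N * 2 ≤ N * k := Nat.mul_le_mul_left _ (by omega)
        omega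
      interval_cases k <;> omega
    · obtain ⟨k, hk⟩ := (Nat.modEq_iff_dvd' hle).1 h2.symm
      have hk2 : k < 1 := by
        by_contra hk2
        have : N * 1 ≤ N * k := Nat.mul_le_mul_left _ (by omega)
        omega
      interval_cases k
      omega
  · rintro (h | h)
    · have := congrArg (Nat.cast : ℕ → ZMod N) h
      simpa using this
    · have := congrArg (Nat.cast : ℕ → ZMod N) h
      simpa using this

theorem zadd1 {N : ℕ} [NeZero N] (u v : ZMod N) :
    v = u + 1 ↔ v.val = u.val + 1 ∨ v.val + N = u.val + 1 := by
  have := zadd u v 1 (Nat.pos_of_ne_zero (NeZero.ne N))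
  simpa using this

theorem zsub1 {N : ℕ} [NeZero N] (u v : ZMod N) :
    v = u - 1 ↔ u.val = v.val + 1 ∨ u.val + N = v.val + 1 := by
  rw [← zadd1, eq_sub_iff_add_eq, eq_comm]

theorem zneg1 {N : ℕ} [NeZero N] (u v : ZMod N) :
    v = u + -1 ↔ u.val = v.val + 1 ∨ u.val + N = v.val + 1 := by
  rw [← zsub1, sub_eq_add_neg]

theorem zeq {N : ℕ} [NeZero N] (u v : ZMod N) : u = v ↔ u.val = v.val :=
  (ZMod.val_injective N).eq_iff.symm

/-- Adjacency of `HTG(1,N,ℓ)` through representatives. -/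
theorem htg1_adj {N : ℕ} [NeZero N] (l : ℕ) (hl : l ≤ N) (v w : ZMod 1 × ZMod N) :
    (HTG 1 N l).Adj v w ↔ v.2.val ≠ w.2.val ∧
      (w.2.val = v.2.val + 1 ∨ w.2.val + N = v.2.val + 1 ∨
       v.2.val = w.2.val + 1 ∨ v.2.val + N = w.2.val + 1 ∨
       (v.2.val % 2 = 1 ∧ (w.2.val = v.2.val + l ∨ w.2.val + N = v.2.val + l)) ∨
       (w.2.val % 2 = 1 ∧ (v.2.val = w.2.val + l ∨ v.2.val + N = w.2.val + l))) := by
  obtain ⟨a, v⟩ := v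
  obtain ⟨b, w⟩ := w
  have ha : a = 0 := Subsingleton.elim _ _
  have hb : b = 0 := Subsingleton.elim _ _
  subst ha hb
  simp only [HTG, SimpleGraph.fromRel_adj, zadd _ _ l hl, zadd1, zsub1, ne_eq, Prod.mk.injEq,
    true_and, ZMod.val_zero, Nat.sub_self, not_true_eq_false, false_and, false_or, zeq v w]
  tauto

theorem ml_adj {n : ℕ} [NeZero (2 * n)] (v w : ZMod (2 * n)) :
    (mobiusLadder n).Adj v w ↔ v.val ≠ w.val ∧
      (w.val = v.val + 1 ∨ w.val + 2 * n = v.val + 1 ∨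
       v.val = w.val + 1 ∨ v.val + 2 * n = w.val + 1 ∨
       w.val = v.val + n ∨ v.val = w.val + n) := by
  have hv := ZMod.val_lt v
  have hw := ZMod.val_lt w
  simp only [mobiusLadder, addCayley, SimpleGraph.fromRel_adj, Set.mem_insert_iff,
    Set.mem_singleton_iff, exists_eq_or_imp, exists_eq_left,
    zadd _ _ n (by omega : n ≤ 2 * n), zadd1, zneg1, ne_eq, zeq v w]
  omega

theorem prism_adj {n : ℕ} [NeZero n] (v w : ZMod 2 × ZMod n) :
    (prismGraph n).Adj v w ↔ ¬ (v.1.val = w.1.val ∧ v.2.val = w.2.val) ∧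
      ((v.1.val ≠ w.1.val ∧ v.2.val = w.2.val) ∨ (v.1.val = w.1.val ∧
      (w.2.val = v.2.val + 1 ∨ w.2.val + n = v.2.val + 1 ∨
       v.2.val = w.2.val + 1 ∨ v.2.val + n = w.2.val + 1))) := by
  obtain ⟨a, v⟩ := v
  obtain ⟨b, w⟩ := w
  have ha := ZMod.val_lt a
  have hb := ZMod.val_lt b
  have hv := ZMod.val_lt v
  have hw := ZMod.val_lt w
  simp only [prismGraph, addCayley, SimpleGraph.fromRel_adj, Set.mem_insert_iff,
    Set.mem_singleton_iff, exists_eq_or_imp, exists_eq_left, Prod.mk_add_mk, Prod.mk.injEq,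
    add_zero, zadd1, zneg1, ne_eq, zeq v w, zeq w v, zeq a b, zeq b a]
  omega

theorem htg2_adj {n : ℕ} [NeZero n] (v w : ZMod 2 × ZMod n) :
    (HTG 2 n 0).Adj v w ↔ (prismGraph n).Adj v w := by
  rw [prism_adj]
  obtain ⟨a, v⟩ := v
  obtain ⟨b, w⟩ := w
  have ha := ZMod.val_lt a
  have hb := ZMod.val_lt b
  have hv := ZMod.val_lt v
  have hw := ZMod.val_lt w
  have e1 : b = 0 ↔ b.val = 0 := by rw [zeq, ZMod.val_zero]
  have e2 : a = 0 ↔ a.val = 0 := by rw [zeq, ZMod.val_zero]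
  simp only [HTG, SimpleGraph.fromRel_adj, Nat.cast_zero, Prod.mk.injEq,
    add_zero, zadd1, zsub1, ne_eq, zeq v w, zeq w v, zeq a b, zeq b a, e1, e2]
  omega

/-- A bijection from injectivity and equal cardinality gives an isomorphism. -/
theorem mkIso {V W : Type*} [Fintype V] [Fintype W] (A : SimpleGraph V) (B : SimpleGraph W)
    (hc : Fintype.card W = Fintype.card V) (g : W → V) (hg : Function.Injective g)
    (h : ∀ x y, A.Adj (g x) (g y) ↔ B.Adj x y) : Nonempty (A ≃g B) := by
  have hb : Function.Bijective g := (Fintype.bijective_iff_injective_and_card g).2 ⟨hg, hc⟩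
  exact ⟨(RelIso.symm ⟨Equiv.ofBijective g hb, by intro a b; exact h a b⟩ : A ≃g B)⟩

/-- Reduction of a number below `4n` modulo `2n`. -/
def red (n t : ℕ) : ℕ := if t < 2 * n then t else t - 2 * n

theorem red_val (n t : ℕ) [NeZero (2 * n)] (ht : t < 4 * n) :
    ((red n t : ℕ) : ZMod (2 * n)).val = red n t :=
  ZMod.val_cast_of_lt (by unfold red; split <;> omega)

theorem red_spec (n t : ℕ) (ht : t < 4 * n) : red n t < 2 * n ∧
    (red n t = t ∨ red n t + 2 * n = t) := by
  unfold red; split <;> omega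

set_option maxHeartbeats 4000000 in
theorem iso_prism (n : ℕ) (hn : 6 ≤ n) (he : Even n) :
    Nonempty (HTG 1 (2 * n) 3 ≃g prismGraph n) := by
  have : NeZero n := ⟨by omega⟩
  have : NeZero (2 * n) := ⟨by omega⟩
  obtain ⟨q, hq⟩ := he
  refine mkIso _ _ (by simp [ZMod.card]) (fun x =>
    (0, ((red n (2 * x.2.val + 1 + (x.1.val + x.2.val) % 2) : ℕ) : ZMod (2 * n)))) ?_ ?_
  · rintro ⟨a, v⟩ ⟨b, w⟩ h
    have ha := ZMod.val_lt a
    have hb := ZMod.val_lt b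
    have hv := ZMod.val_lt v
    have hw := ZMod.val_lt w
    simp only [Prod.mk.injEq, true_and] at h
    rw [zeq, red_val _ _ (by omega), red_val _ _ (by omega)] at h
    have h1 := red_spec n (2 * v.val + 1 + (a.val + v.val) % 2) (by omega)
    have h2 := red_spec n (2 * w.val + 1 + (b.val + w.val) % 2) (by omega)
    rw [Prod.mk.injEq, zeq a, zeq v]
    omega
  · rintro ⟨a, v⟩ ⟨b, w⟩
    have ha := ZMod.val_lt a
    have hb := ZMod.val_lt b
    have hv := ZMod.val_lt v
    have hw := ZMod.val_lt w
    rw [htg1_adj 3 (by omega), prism_adj]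
    dsimp only
    rw [red_val _ _ (by omega), red_val _ _ (by omega)]
    have h1 := red_spec n (2 * v.val + 1 + (a.val + v.val) % 2) (by omega)
    have h2 := red_spec n (2 * w.val + 1 + (b.val + w.val) % 2) (by omega)
    generalize red n (2 * v.val + 1 + (a.val + v.val) % 2) = r at *
    generalize red n (2 * w.val + 1 + (b.val + w.val) % 2) = s at *
    generalize a.val = a at *
    generalize b.val = b at *
    generalize v.val = v at *
    generalize w.val = w at *
    obtain ⟨hr, h1⟩ := h1
    obtain ⟨hs, h2⟩ := h2
    obtain ⟨v', rfl | rfl⟩ := Nat.even_or_odd' v <;> obtain ⟨w', rfl | rfl⟩ := Nat.even_or_odd' w <;>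
      interval_cases a <;> interval_cases b <;> rcases h1 with h1 | h1 <;>
      rcases h2 with h2 | h2 <;> constructor <;> rintro ⟨h0, h⟩ <;> refine ⟨by omega, ?_⟩ <;> omega

set_option maxHeartbeats 4000000 in
theorem iso_ml (n : ℕ) (hn : 3 ≤ n) (ho : Odd n) :
    Nonempty (HTG 1 (2 * n) 3 ≃g mobiusLadder n) := by
  have : NeZero (2 * n) := ⟨by omega⟩
  have : NeZero n := ⟨by omega⟩
  obtain ⟨q, hq⟩ := ho
  have key : ∀ v : ZMod (2 * n), ∃ r, r < 2 * n ∧ 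
      (r = 2 * v.val + 1 + v.val % 2 ∨ r + 2 * n = 2 * v.val + 1 + v.val % 2 ∨
        r + 4 * n = 2 * v.val + 1 + v.val % 2) := by
    intro v
    have hv := ZMod.val_lt v
    rcases lt_or_ge (2 * v.val + 1 + v.val % 2) (2 * n) with h | h
    · exact ⟨_, h, Or.inl rfl⟩
    rcases lt_or_ge (2 * v.val + 1 + v.val % 2) (4 * n) with h | h
    · exact ⟨2 * v.val + 1 + v.val % 2 - 2 * n, by omega, by omega⟩
    · exact ⟨2 * v.val + 1 + v.val % 2 - 4 * n, by omega, by omega⟩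
  choose r hr1 hr2 using key
  refine mkIso _ _ (by simp [ZMod.card]) (fun x => (0, ((r x : ℕ) : ZMod (2 * n)))) ?_ ?_
  · intro v w h
    have hv := ZMod.val_lt v
    have hw := ZMod.val_lt w
    have h1 := hr1 v
    have h2 := hr2 v
    have h3 := hr1 w
    have h4 := hr2 w
    simp only [Prod.mk.injEq, true_and] at h
    rw [zeq, ZMod.val_cast_of_lt h1, ZMod.val_cast_of_lt h3] at h
    rw [zeq]
    omega
  · intro v w
    have hv := ZMod.val_lt v
    have hw := ZMod.val_lt w
    have h1 := hr1 v
    have h2 := hr2 v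
    have h3 := hr1 w
    have h4 := hr2 w
    rw [htg1_adj 3 (by omega), ml_adj]
    dsimp only
    rw [ZMod.val_cast_of_lt h1, ZMod.val_cast_of_lt h3]
    generalize r v = p at *
    generalize r w = s at *
    generalize v.val = v at *
    generalize w.val = w at *
    obtain ⟨v', rfl | rfl⟩ := Nat.even_or_odd' v <;> obtain ⟨w', rfl | rfl⟩ := Nat.even_or_odd' w <;>
      rcases h2 with h2 | h2 | h2 <;>
      rcases h4 with h4 | h4 | h4 <;> constructor <;> rintro ⟨h0, h⟩ <;> refine ⟨by omega, ?_⟩ <;> omega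

theorem iso_ml' (n : ℕ) (hn : 3 ≤ n) (ho : Odd n) :
    Nonempty (HTG 1 (2 * n) n ≃g mobiusLadder n) := by
  have : NeZero (2 * n) := ⟨by omega⟩
  obtain ⟨q, hq⟩ := ho
  refine mkIso _ _ (by simp [ZMod.card]) (fun x => (0, x)) ?_ ?_
  · intro v w h
    simpa using h
  · intro v w
    have hv := ZMod.val_lt v
    have hw := ZMod.val_lt w
    rw [htg1_adj n (by omega), ml_adj]
    dsimp only
    omega

/-- (i) For even `n ≥ 6`, `HTG(2,n,0)` and `HTG(1,2n,3)` are both isomorphic to the prism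
`Pr(n)`; (ii) for odd `n ≥ 3`, `HTG(1,2n,n)` and `HTG(1,2n,3)` are both isomorphic to the
Möbius ladder `Ml(n)`. -/
theorem statement18 :
    (∀ n : ℕ, 6 ≤ n → Even n →
      Nonempty (HTG 2 n 0 ≃g prismGraph n) ∧
      Nonempty (HTG 1 (2 * n) 3 ≃g prismGraph n)) ∧
    (∀ n : ℕ, 3 ≤ n → Odd n →
      Nonempty (HTG 1 (2 * n) n ≃g mobiusLadder n) ∧
      Nonempty (HTG 1 (2 * n) 3 ≃g mobiusLadder n)) := by
  refine ⟨fun n hn he => ⟨?_, iso_prism n hn he⟩, fun n hn ho => ⟨iso_ml' n hn ho, iso_ml n hn ho⟩⟩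
  have : NeZero n := ⟨by omega⟩
  exact ⟨⟨Equiv.refl _, by intro a b; exact (htg2_adj a b).symm⟩⟩

end HTGPaper
end

section
/- Let m and n be positive integers with n ≥ 4 even, let 0 ≤ ℓ ≤ n−1 be an integer of the same parity as m, and let Γ = HTG(m,n,ℓ) have girth 6. If some automorphism of Γ is not color permuting, then Γ is 2-arc-transitive and is isomorphic to the Heawood graph, the Pappus graph, or the Möbius–Kantor graph. -/
namespace HTGPaper

/-- Basic properties of the connection set: three involutions of a generalized dihedral group. -/
structure Su0 {H : Type*} [Group H] (s : Fin 3 → H) : Prop where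
  sq : ∀ i, s i * s i = 1
  hex : ∀ i j k, (s i * s j * s k) * (s i * s j * s k) = 1
  gen : Subgroup.closure (Set.range s) = ⊤
  sg : ∃ χ : H →* ℤˣ, ∀ i, χ (s i) = -1

/-- In addition: the three involutions are distinct and there are no 4-cycles. -/
structure Su {H : Type*} [Group H] (s : Fin 3 → H) : Prop extends Su0 s where
  inj : Function.Injective s
  four : ∀ i j k l, i ≠ j → j ≠ k → k ≠ l → l ≠ i → s i * s j * s k * s l ≠ 1

section generic

variable {H : Type*} [Group H] {s : Fin 3 → H}

lemma Su.perm (h : Su s) (σ : Equiv.Perm (Fin 3)) : Su (s ∘ σ) where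
  sq i := h.sq _
  hex i j k := h.hex _ _ _
  gen := by rw [σ.surjective.range_comp]; exact h.gen
  sg := by obtain ⟨χ, hχ⟩ := h.sg; exact ⟨χ, fun i => hχ _⟩
  inj := h.inj.comp σ.injective
  four i j k l h1 h2 h3 h4 := h.four _ _ _ _ (σ.injective.ne h1) (σ.injective.ne h2)
    (σ.injective.ne h3) (σ.injective.ne h4)

lemma Su0.mm (h : Su0 s) (g : H) (i : Fin 3) : g * s i * s i = g := by
  rw [mul_assoc, h.sq, mul_one]

lemma Su0.inv (h : Su0 s) (i : Fin 3) : (s i)⁻¹ = s i := inv_eq_of_mul_eq_one_left (h.sq i)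

lemma Su0.ne_one (h : Su0 s) (i : Fin 3) : s i ≠ 1 := by
  obtain ⟨χ, hχ⟩ := h.sg
  intro h1
  have := hχ i
  rw [h1, map_one] at this
  exact absurd this (by decide)

lemma Su0.adj (h : Su0 s) (g k : H) :
    (cayley H (Set.range s)).Adj g k ↔ ∃ i, k = g * s i := by
  unfold cayley
  rw [SimpleGraph.fromRel_adj]
  constructor
  · rintro ⟨_, ⟨_, ⟨i, rfl⟩, h1⟩ | ⟨_, ⟨i, rfl⟩, h1⟩⟩
    · exact ⟨i, h1⟩
    · exact ⟨i, by rw [h1, h.mm]⟩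
  · rintro ⟨i, rfl⟩
    refine ⟨?_, Or.inl ⟨_, ⟨i, rfl⟩, rfl⟩⟩
    intro h1
    exact h.ne_one i (left_eq_mul.mp h1)

/-- Induction along edges. -/
lemma Su0.ind (h : Su0 s) {P : H → Prop} (h1 : P 1) (hs : ∀ g i, P g → P (g * s i)) (g : H) :
    P g := by
  have hg : g ∈ Subgroup.closure (Set.range s) := by rw [h.gen]; trivial
  induction hg using Subgroup.closure_induction_right with
  | one => exact h1
  | mul_right x hx y hy ih => obtain ⟨i, rfl⟩ := hy; exact hs _ _ ih
  | mul_inv_cancel x hx y hy ih => obtain ⟨i, rfl⟩ := hy; rw [h.inv]; exact hs _ _ ih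

/-! ### Coordinates -/

/-- The element `X^i Y^j`. -/
def M (s : Fin 3 → H) (i j : ℤ) : H := (s 0 * s 1) ^ i * (s 0 * s 2) ^ j

lemma Su0.comm (h : Su0 s) : Commute (s 0 * s 1) (s 0 * s 2) := by
  have h1 := h.hex 1 0 2
  have e : s 1 * s 0 * s 2 = s 2 * s 0 * s 1 := by
    rw [mul_eq_one_iff_eq_inv] at h1
    rw [h1]; simp [h.inv, mul_assoc]
  unfold Commute SemiconjBy
  calc s 0 * s 1 * (s 0 * s 2) = s 0 * (s 1 * s 0 * s 2) := by group
    _ = _ := by rw [e]; group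

lemma Su0.M_mul (h : Su0 s) (i j k l : ℤ) : M s i j * M s k l = M s (i + k) (j + l) := by
  unfold M
  rw [zpow_add, zpow_add, mul_assoc, mul_assoc]
  congr 1
  rw [← mul_assoc, ← mul_assoc]
  congr 1
  exact ((h.comm.zpow_zpow k j).eq).symm

lemma M_zero : M s 0 0 = 1 := by simp [M]

lemma Su0.M_pow (h : Su0 s) (i j : ℤ) (p : ℤ) : (M s i j) ^ p = M s (p * i) (p * j) := by
  unfold M
  rw [(h.comm.zpow_zpow i j).mul_zpow, ← zpow_mul, ← zpow_mul, mul_comm i, mul_comm j]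

lemma Su0.comb (h : Su0 s) {i j k l : ℤ} (h1 : M s i j = 1) (h2 : M s k l = 1) (p q : ℤ)
    {u v : ℤ} (hu : u = p * i + q * k) (hv : v = p * j + q * l) : M s u v = 1 := by
  rw [hu, hv, ← h.M_mul, ← h.M_pow, ← h.M_pow, h1, h2]; simp

/-- coordinates -/
def D1 : Fin 3 → ℤ := ![0, 1, 0]
def D2 : Fin 3 → ℤ := ![0, 0, 1]

lemma Su0.zero_mul (h : Su0 s) (i : Fin 3) : s 0 * s i = M s (D1 i) (D2 i) := by
  fin_cases i <;> simp [M, D1, D2, h.sq]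

lemma Su0.mul_zero (h : Su0 s) (i : Fin 3) : s i * s 0 = M s (-D1 i) (-D2 i) := by
  have : s i * s 0 = (s 0 * s i)⁻¹ := by simp [h.inv]
  rw [this, h.zero_mul, ← zpow_neg_one, h.M_pow]; simp

lemma Su0.mul2 (h : Su0 s) (i j : Fin 3) : s i * s j = M s (D1 j - D1 i) (D2 j - D2 i) := by
  have : s i * s j = (s i * s 0) * (s 0 * s j) := by
    rw [← mul_assoc, h.mm]
  rw [this, h.zero_mul, h.mul_zero, h.M_mul]
  congr 1 <;> ring

lemma Su0.mul4 (h : Su0 s) (i j k l : Fin 3) : s i * s j * s k * s l =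
    M s (D1 j - D1 i + (D1 l - D1 k)) (D2 j - D2 i + (D2 l - D2 k)) := by
  rw [mul_assoc (s i * s j), h.mul2 i, h.mul2 k, h.M_mul]

lemma Su0.mul6 (h : Su0 s) (i j k l p q : Fin 3) : s i * s j * s k * s l * s p * s q =
    M s (D1 j - D1 i + (D1 l - D1 k) + (D1 q - D1 p))
      (D2 j - D2 i + (D2 l - D2 k) + (D2 q - D2 p)) := by
  rw [mul_assoc (s i * s j * s k * s l), h.mul4, h.mul2 p, h.M_mul]

lemma Su0.zero_M (h : Su0 s) (i j : ℤ) : s 0 * M s i j = M s (-i) (-j) * s 0 := by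
  have e1 : ∀ k, s 0 * (s 0 * s k) = (s 0 * s k)⁻¹ * s 0 := by
    intro k; rw [mul_inv_rev, h.inv, h.inv, h.mm, ← mul_assoc, h.sq, one_mul]
  have e2 : ∀ k (i : ℤ), s 0 * (s 0 * s k) ^ i = (s 0 * s k) ^ (-i) * s 0 := by
    intro k i
    have : SemiconjBy (s 0) (s 0 * s k) (s 0 * s k)⁻¹ := e1 k
    have := this.zpow_right i
    rw [inv_zpow'] at this
    exact this
  unfold M
  rw [← mul_assoc, e2, mul_assoc, e2, ← mul_assoc]

lemma Su0.M_ne_zero_mul (h : Su0 s) (i j k l : ℤ) : M s i j ≠ M s k l * s 0 := by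
  obtain ⟨χ, hχ⟩ := h.sg
  intro h1
  have := congrArg χ h1
  simp [M, hχ] at this

/-- Forbidden relations. -/
lemma Su.forb (h : Su s) : M s 1 0 ≠ 1 ∧ M s 0 1 ≠ 1 ∧ M s 1 (-1) ≠ 1 ∧ M s 2 0 ≠ 1 ∧ M s 0 2 ≠ 1 ∧
    M s 2 (-2) ≠ 1 ∧ M s 1 1 ≠ 1 ∧ M s 2 (-1) ≠ 1 ∧ M s 1 (-2) ≠ 1 := by
  have h4 := h.four
  simp only [h.mul4] at h4
  have a1 : M s 2 0 ≠ 1 := h4 0 1 0 1 (by decide) (by decide) (by decide) (by decide)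
  have a2 : M s 0 2 ≠ 1 := h4 0 2 0 2 (by decide) (by decide) (by decide) (by decide)
  have a3 : M s 2 (-2) ≠ 1 := h4 2 1 2 1 (by decide) (by decide) (by decide) (by decide)
  have a4 : M s 1 1 ≠ 1 := h4 0 1 0 2 (by decide) (by decide) (by decide) (by decide)
  have a5 : M s 2 (-1) ≠ 1 := h4 0 1 2 1 (by decide) (by decide) (by decide) (by decide)
  have a6 : M s 1 (-2) ≠ 1 := h4 2 0 2 1 (by decide) (by decide) (by decide) (by decide)
  refine ⟨fun h1 => a1 ?_, fun h1 => a2 ?_, fun h1 => a3 ?_, a1, a2, a3, a4, a5, a6⟩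
  all_goals exact h.comb h1 h1 2 0 (by norm_num) (by norm_num)

/-! ### Hexagons -/

/-- The 3-arc with colors `c1, e, c3` lies on a hexagon. -/
def HexW (s : Fin 3 → H) (c1 e c3 : Fin 3) : Prop :=
  ∃ r q u, r ≠ c3 ∧ q ≠ r ∧ u ≠ q ∧ u ≠ c1 ∧ s c1 * s e * s c3 * s r * s q * s u = 1

/-- The 3-arc lies on a hexagon, in graph terms. -/
def Hex {V : Type*} (Γ : SimpleGraph V) (v0 v1 v2 v3 : V) : Prop :=
  ∃ v4 v5, Γ.Adj v3 v4 ∧ Γ.Adj v4 v5 ∧ Γ.Adj v5 v0 ∧ v4 ≠ v2 ∧ v5 ≠ v3 ∧ v0 ≠ v4 ∧ v5 ≠ v1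

lemma Hex.map {V : Type*} {Γ : SimpleGraph V} (f : Γ ≃g Γ) {v0 v1 v2 v3 : V}
    (h : Hex Γ v0 v1 v2 v3) : Hex Γ (f v0) (f v1) (f v2) (f v3) := by
  obtain ⟨v4, v5, a, b, c, d, e, g, i⟩ := h
  exact ⟨f v4, f v5, f.map_adj_iff.2 a, f.map_adj_iff.2 b, f.map_adj_iff.2 c,
    f.injective.ne d, f.injective.ne e, f.injective.ne g, f.injective.ne i⟩

lemma Hex.map_iff {V : Type*} {Γ : SimpleGraph V} (f : Γ ≃g Γ) {v0 v1 v2 v3 : V} :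
    Hex Γ (f v0) (f v1) (f v2) (f v3) ↔ Hex Γ v0 v1 v2 v3 := by
  refine ⟨fun h => ?_, fun h => h.map f⟩
  have := h.map f.symm
  simpa using this

lemma Su.hex_iff (h : Su s) (g : H) (c1 e c3 : Fin 3) :
    Hex (cayley H (Set.range s)) (g * s c1) g (g * s e) (g * s e * s c3) ↔ HexW s c1 e c3 := by
  unfold Hex HexW
  simp only [h.adj]
  constructor
  · rintro ⟨_, _, ⟨r, rfl⟩, ⟨q, rfl⟩, ⟨u, hu⟩, h1, h2, h3, h4⟩
    refine ⟨r, q, u, ?_, ?_, ?_, ?_, ?_⟩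
    · rintro rfl; exact h1 (h.mm _ _)
    · rintro rfl; exact h2 (h.mm _ _)
    · rintro rfl; rw [h.mm] at hu; exact h3 hu
    · rintro rfl; exact h4 (mul_right_cancel hu).symm
    · have : s c1 = s e * s c3 * s r * s q * s u := by
        apply mul_left_cancel (a := g); rw [hu]; group
      have h5 := h.sq c1
      nth_rewrite 2 [this] at h5
      rw [← h5]; group
  · rintro ⟨r, q, u, h1, h2, h3, h4, h5⟩
    have hu : g * s c1 = g * s e * s c3 * s r * s q * s u := by
      have : s c1 = s e * s c3 * s r * s q * s u := by
        rw [← h.inv c1]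
        apply inv_eq_of_mul_eq_one_right; rw [← h5]; group
      rw [this]; group
    refine ⟨_, _, ⟨r, rfl⟩, ⟨q, rfl⟩, ⟨u, hu⟩, ?_, ?_, ?_, ?_⟩
    · intro h6
      apply h1; apply h.inj
      rw [mul_assoc, mul_eq_left, mul_eq_one_iff_eq_inv, h.inv] at h6
      exact h6.symm
    · intro h6
      apply h2; apply h.inj
      rw [mul_assoc, mul_eq_left, mul_eq_one_iff_eq_inv, h.inv] at h6
      exact h6.symm
    · intro h6
      rw [hu, mul_assoc, mul_eq_left, mul_eq_one_iff_eq_inv, h.inv] at h6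
      exact h3 (h.inj h6).symm
    · intro h6
      rw [h6] at hu
      exact h4 (h.inj (mul_left_cancel hu)).symm

lemma Su.hexW_distinct (h : Su s) {c1 e c3 : Fin 3} (h1 : c1 ≠ e) (h2 : e ≠ c3) (h3 : c1 ≠ c3) :
    HexW s c1 e c3 := by
  refine ⟨c1, e, c3, h3, h1.symm, h2.symm, h3.symm, ?_⟩
  rw [← h.hex c1 e c3]; group

lemma Su.hexW_101 (h : Su s) (h1 : HexW s 1 0 1) :
    M s 3 0 = 1 ∨ M s 3 (-1) = 1 ∨ M s 2 1 = 1 ∨ M s 3 (-2) = 1 := by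
  obtain ⟨r, q, u, a, b, c, d, e⟩ := h1
  rw [h.mul6] at e
  obtain ⟨-, -, -, -, -, f, -⟩ := h.forb
  fin_cases r <;> fin_cases q <;> fin_cases u <;> simp [D1, D2] at a b c d e <;>
  first
  | exact Or.inl (h.comb e e (-1) 0 (by decide) (by decide))
  | exact Or.inr (Or.inl (h.comb e e (-1) 0 (by decide) (by decide)))
  | exact Or.inr (Or.inr (Or.inl (h.comb e e (-1) 0 (by decide) (by decide))))
  | exact Or.inr (Or.inr (Or.inr (h.comb e e (-1) 0 (by decide) (by decide))))
  | exact absurd (h.comb e e (-1) 0 (by decide) (by decide)) f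

lemma Su.hexW_202 (h : Su s) (h1 : HexW s 2 0 2) :
    M s 0 3 = 1 ∨ M s (-1) 3 = 1 ∨ M s 1 2 = 1 ∨ M s (-2) 3 = 1 := by
  obtain ⟨r, q, u, a, b, c, d, e⟩ := h1
  rw [h.mul6] at e
  obtain ⟨-, -, -, -, -, f, -⟩ := h.forb
  fin_cases r <;> fin_cases q <;> fin_cases u <;> simp [D1, D2] at a b c d e <;>
  first
  | exact Or.inl (h.comb e e (-1) 0 (by decide) (by decide))
  | exact Or.inr (Or.inl (h.comb e e (-1) 0 (by decide) (by decide)))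
  | exact Or.inr (Or.inr (Or.inl (h.comb e e (-1) 0 (by decide) (by decide))))
  | exact Or.inr (Or.inr (Or.inr (h.comb e e (-1) 0 (by decide) (by decide))))
  | exact absurd (h.comb e e 1 0 (by decide) (by decide)) f

/-! ### Automorphisms -/

/-- `f` acts on colors in a constant way. -/
def Uniform (s : Fin 3 → H) (f : H → H) : Prop :=
  ∃ σ : Fin 3 → Fin 3, ∀ g i, f (g * s i) = f g * s (σ i)

lemma Su0.step (h : Su0 s) (f : cayley H (Set.range s) ≃g cayley H (Set.range s)) (g : H)
    (i : Fin 3) : ∃ j, f (g * s i) = f g * s j := by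
  rw [← h.adj, f.map_adj_iff, h.adj]; exact ⟨i, rfl⟩

lemma Su0.uniform (h : Su0 s) (f : cayley H (Set.range s) ≃g cayley H (Set.range s))
    (hf : ∀ g e i, (f (g * s e))⁻¹ * f (g * s e * s i) = (f g)⁻¹ * f (g * s i)) :
    Uniform s f := by
  choose σ hσ using h.step f 1
  refine ⟨σ, fun g => ?_⟩
  refine h.ind (P := fun g => ∀ i, f (g * s i) = f g * s (σ i)) hσ ?_ g
  intro g e ih i
  have := hf g e i
  rw [ih i, inv_mul_cancel_left, inv_mul_eq_iff_eq_mul] at this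
  exact this

lemma Su0.uniform_degenerate (h : Su0 s) (hi : ¬ Function.Injective s)
    (f : cayley H (Set.range s) ≃g cayley H (Set.range s)) : Uniform s f := by
  apply h.uniform
  intro g e i
  obtain ⟨k1, h1⟩ := h.step f g e
  obtain ⟨k2, h2⟩ := h.step f g i
  obtain ⟨k3, h3⟩ := h.step f (g * s e) i
  have h4 : f g = f (g * s e) * s k1 := by rw [h1, h.mm]
  rw [h2, h3, inv_mul_cancel_left, inv_mul_cancel_left]
  by_cases hie : s i = s e
  · rw [hie, h.mm, h4] at h3
    rw [hie, h1] at h2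
    rw [← mul_left_cancel h3, mul_left_cancel h2]
  · by_contra h5
    have h12 : s k1 ≠ s k2 := by
      intro h6; rw [← h6, ← h1] at h2
      exact hie (mul_left_cancel (f.injective h2))
    have h13 : s k1 ≠ s k3 := by
      intro h6; rw [← h6, ← h4] at h3
      apply hie
      have := f.injective h3
      rw [mul_assoc, mul_eq_left, mul_eq_one_iff_eq_inv, h.inv] at this
      exact this.symm
    apply hi
    have key : ∀ k1 k2 k3 i j : Fin 3, k1 ≠ k2 → k1 ≠ k3 → k2 ≠ k3 → i ≠ j →
        (i = k1 ∧ j = k2) ∨ (i = k1 ∧ j = k3) ∨ (i = k2 ∧ j = k3) ∨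
        (j = k1 ∧ i = k2) ∨ (j = k1 ∧ i = k3) ∨ (j = k2 ∧ i = k3) := by decide
    intro a b hab
    by_contra hne
    rcases key k1 k2 k3 a b (fun h => h12 (h ▸ rfl)) (fun h => h13 (h ▸ rfl))
      (fun h => h5 (h ▸ rfl)) hne with
      ⟨rfl, rfl⟩ | ⟨rfl, rfl⟩ | ⟨rfl, rfl⟩ | ⟨rfl, rfl⟩ | ⟨rfl, rfl⟩ | ⟨rfl, rfl⟩
    exacts [h12 hab, h13 hab, h5 hab.symm, h12 hab.symm, h13 hab.symm, h5 hab]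

/-- The local color permutation. -/
lemma Su.tau (h : Su s) (f : cayley H (Set.range s) ≃g cayley H (Set.range s)) :
    ∃ τ : H → Fin 3 → Fin 3, (∀ g i, f (g * s i) = f g * s (τ g i)) ∧
      (∀ g, Function.Injective (τ g)) ∧ (∀ g i, τ (g * s i) i = τ g i) := by
  choose τ hτ using h.step f
  refine ⟨τ, hτ, ?_, ?_⟩
  · intro g i j hij
    have := hτ g i
    rw [hij, ← hτ] at this
    exact h.inj (mul_left_cancel (f.injective this))
  · intro g i
    have h1 := hτ (g * s i) i
    rw [h.mm, hτ g i] at h1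
    have h2 : f g * s (τ g i) * s (τ (g * s i) i) = f g * s (τ g i) * s (τ g i) := by
      rw [h.mm]; exact h1.symm
    exact h.inj (mul_left_cancel h2)

lemma Su.hex_tau (h : Su s) (f : cayley H (Set.range s) ≃g cayley H (Set.range s))
    {τ : H → Fin 3 → Fin 3} (h1 : ∀ g i, f (g * s i) = f g * s (τ g i)) (g : H) (c1 e c3 : Fin 3) :
    HexW s (τ g c1) (τ g e) (τ (g * s e) c3) ↔ HexW s c1 e c3 := by
  rw [← h.hex_iff (f g), ← h.hex_iff g, ← h1, ← h1, ← h1]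
  exact Hex.map_iff f

lemma fin3_perm (π ρ : Fin 3 → Fin 3) (hπ : Function.Injective π) (hρ : Function.Injective ρ)
    (e i : Fin 3) (he : π e = ρ e) (hi : π i ≠ ρ i) (c : Fin 3) (hc : c ≠ π e) :
    ∃ a b, a ≠ e ∧ e ≠ b ∧ a ≠ b ∧ π a = c ∧ ρ b = c := by
  obtain ⟨a, ha⟩ := (Finite.injective_iff_surjective.1 hπ) c
  obtain ⟨b, hb⟩ := (Finite.injective_iff_surjective.1 hρ) c
  refine ⟨a, b, ?_, ?_, ?_, ha, hb⟩
  · rintro rfl; exact hc ha.symm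
  · rintro rfl; exact hc (hb.symm.trans he.symm)
  · rintro rfl
    have hae : a ≠ e := by rintro rfl; exact hc ha.symm
    have hia : i ≠ a := by rintro rfl; exact hi (ha.trans hb.symm)
    have hie : i ≠ e := by rintro rfl; exact hi he
    have key : ∀ x y z w : Fin 3, x ≠ y → z ≠ x → z ≠ y → w ≠ x → w ≠ y → z = w := by decide
    exact hi (key (π a) (π e) _ _ (hπ.ne hae) (hπ.ne hia) (hπ.ne hie)
      (by rw [ha, ← hb]; exact hρ.ne hia) (by rw [he]; exact hρ.ne hie))

lemma Su.exists_color (h : Su s) (f : cayley H (Set.range s) ≃g cayley H (Set.range s))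
    (hf : ¬ Uniform s f) : ∃ k, ∀ c, c ≠ k → HexW s c k c := by
  by_contra hcon
  push Not at hcon
  apply hf
  obtain ⟨τ, h1, h2, h3⟩ := h.tau f
  apply h.uniform
  intro g e i
  rw [h1 _ i, h1 _ i, inv_mul_cancel_left, inv_mul_cancel_left]
  by_contra h4
  have h5 : τ g i ≠ τ (g * s e) i := fun h6 => h4 (by rw [h6])
  obtain ⟨c, hc, hc'⟩ := hcon (τ g e)
  obtain ⟨a, b, ha, hb, hab, hac, hbc⟩ := fin3_perm _ _ (h2 g) (h2 (g * s e)) e i (h3 g e).symm h5 c hc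
  apply hc'
  have := (h.hex_tau f h1 g a e b).2 (h.hexW_distinct ha hb hab)
  rwa [hac, hbc] at this

/-- The case of the cyclic group of order 9. -/
lemma Su.uniform9 (h : Su s) (h1 : M s 2 1 = 1) (h2 : M s 9 0 = 1)
    (f : cayley H (Set.range s) ≃g cayley H (Set.range s)) : Uniform s f := by
  obtain ⟨b1, b2, b3, b4, b5, b6, b7, b8, b9⟩ := h.forb
  have hno : ¬ HexW s 2 0 2 := by
    intro h3
    have h30 : M s 3 0 ≠ 1 := fun h4 => b3 (h.comb h1 h4 (-1) 1 (by norm_num) (by norm_num))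
    rcases h.hexW_202 h3 with h4 | h4 | h4 | h4
    · have h5 : M s (-6) 0 = 1 := h.comb h4 h1 1 (-3) (by norm_num) (by norm_num)
      exact h30 (h.comb h5 h2 1 1 (by norm_num) (by norm_num))
    · have h5 : M s (-7) 0 = 1 := h.comb h4 h1 1 (-3) (by norm_num) (by norm_num)
      exact b4 (h.comb h5 h2 1 1 (by norm_num) (by norm_num))
    · have h5 : M s (-3) 0 = 1 := h.comb h4 h1 1 (-2) (by norm_num) (by norm_num)
      exact h30 (h.comb h5 h2 (-1) 0 (by norm_num) (by norm_num))
    · have h5 : M s (-8) 0 = 1 := h.comb h4 h1 1 (-3) (by norm_num) (by norm_num)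
      exact b1 (h.comb h5 h2 1 1 (by norm_num) (by norm_num))
  have hyes : ∀ m c, c ≠ m → HexW s c m c ∨ (m = 0 ∧ c = 2) := by
    intro m c hcm
    have key : ∀ m c : Fin 3, c ≠ m → (m = 0 ∧ c = 2) ∨ ∃ r q u : Fin 3,
        r ≠ c ∧ q ≠ r ∧ u ≠ q ∧ u ≠ c ∧
        (9 : ℤ) ∣ (D1 m - D1 c + (D1 r - D1 c) + (D1 u - D1 q)) -
          2 * (D2 m - D2 c + (D2 r - D2 c) + (D2 u - D2 q)) := by decide
    rcases key m c hcm with h3 | ⟨r, q, u, a1, a2, a3, a4, k, hk⟩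
    · exact Or.inr h3
    · refine Or.inl ⟨r, q, u, a1, a2, a3, a4, ?_⟩
      rw [h.mul6]
      exact h.comb h1 h2 (D2 m - D2 c + (D2 r - D2 c) + (D2 u - D2 q)) k (by linarith) (by ring)
  obtain ⟨τ, t1, t2, t3⟩ := h.tau f
  have hid : ∀ g, τ g 0 = 0 ∧ τ g 2 = 2 := by
    intro g
    have h5 : ¬ HexW s (τ g 2) (τ g 0) (τ (g * s 0) 2) := fun h6 => hno ((h.hex_tau f t1 g 2 0 2).1 h6)
    have ne1 : τ g 2 ≠ τ g 0 := (t2 g).ne (by decide)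
    have ne2 : τ g 0 ≠ τ (g * s 0) 2 := by rw [← t3]; exact (t2 _).ne (by decide)
    by_cases h7 : τ g 2 = τ (g * s 0) 2
    · rw [← h7] at h5
      rcases hyes _ _ ne1 with h8 | h8
      · exact absurd h8 h5
      · exact h8
    · exact absurd (h.hexW_distinct ne1 ne2 h7) h5
  refine ⟨id, fun g i => ?_⟩
  rw [t1]
  congr 2
  have key : ∀ i x y z : Fin 3, x = 0 → z = 2 → y ≠ x → y ≠ z → ![x, y, z] i = i := by decide
  have := key i (τ g 0) (τ g 1) (τ g 2) (hid g).1 (hid g).2 ((t2 g).ne (by decide)) ((t2 g).ne (by decide))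
  rw [id, ← this]
  fin_cases i
  · exact congrArg (τ g) this
  · exact congrArg (τ g) this
  · exact congrArg (τ g) this

end generic
section models

variable {H : Type*} [Group H] {s : Fin 3 → H}

/-- The vertex of the Cayley graph with given coordinates. -/
def Phi (s : Fin 3 → H) (p q : ℤ) (r : Bool) : H := if r then M s p q * s 0 else M s p q

lemma Su0.Phi_false (h : Su0 s) (p q : ℤ) (c : Fin 3) :
    Phi s p q false * s c = Phi s (p - D1 c) (q - D2 c) true := by
  simp only [Phi, if_true, Bool.false_eq_true, if_false]
  have : M s p q * s c = M s p q * (s c * s 0) * s 0 := by rw [← mul_assoc, h.mm]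
  rw [this, h.mul_zero, h.M_mul]; rfl

lemma Su0.Phi_true (h : Su0 s) (p q : ℤ) (c : Fin 3) :
    Phi s p q true * s c = Phi s (p + D1 c) (q + D2 c) false := by
  simp only [Phi, if_true, Bool.false_eq_true, if_false]
  rw [mul_assoc, h.zero_mul, h.M_mul]

lemma Su0.M_eq (h : Su0 s) {p q p' q' : ℤ} : M s p q = M s p' q' ↔ M s (p - p') (q - q') = 1 := by
  have : M s p q = M s (p - p') (q - q') * M s p' q' := by rw [h.M_mul]; simp
  rw [this]; simp

lemma Su0.Phi_eq (h : Su0 s) {p q p' q' : ℤ} {r r' : Bool} :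
    Phi s p q r = Phi s p' q' r' ↔ r = r' ∧ M s (p - p') (q - q') = 1 := by
  cases r <;> cases r' <;> simp only [Phi, if_true, Bool.false_eq_true, if_false]
  · simp [h.M_eq]
  · simpa using h.M_ne_zero_mul _ _ _ _
  · simpa using (h.M_ne_zero_mul _ _ _ _).symm
  · simp [h.M_eq]

/-- A finite graph whose vertices have coordinates is isomorphic to the Cayley graph. -/
lemma Su0.model (h : Su0 s) {V : Type*} (Γ : SimpleGraph V) (nb : Fin 3 → V → V)
    (hadj : ∀ i j, Γ.Adj i j ↔ ∃ c, j = nb c i) (L : ℤ → ℤ → Prop)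
    (hL : ∀ p q, M s p q = 1 ↔ L p q) (P Q : V → ℤ) (B : V → Bool)
    (hstep : ∀ i c, B (nb c i) = !(B i) ∧
      L (P (nb c i) - (if B i then P i + D1 c else P i - D1 c))
        (Q (nb c i) - (if B i then Q i + D2 c else Q i - D2 c)))
    (hinj : ∀ i j, B i = B j → L (P i - P j) (Q i - Q j) → i = j)
    (v0 : V) (hP : P v0 = 0) (hQ : Q v0 = 0) (hB : B v0 = false) :
    ∃ ψ : Γ ≃g cayley H (Set.range s), ψ v0 = 1 := by
  let φ : V → H := fun i => Phi s (P i) (Q i) (B i)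
  have hφ : ∀ c i, φ (nb c i) = φ i * s c := by
    intro c i
    obtain ⟨h1, h2⟩ := hstep i c
    simp only [φ]
    cases hb : B i
    · rw [h.Phi_false, h.Phi_eq, h1, hb, hL]
      rw [hb] at h2
      exact ⟨rfl, h2⟩
    · rw [h.Phi_true, h.Phi_eq, h1, hb, hL]
      rw [hb] at h2
      exact ⟨rfl, h2⟩
  have hi : Function.Injective φ := by
    intro i j hij
    obtain ⟨h1, h2⟩ := h.Phi_eq.1 hij
    exact hinj i j h1 ((hL _ _).1 h2)
  have h0 : φ v0 = 1 := by simp [φ, hP, hQ, hB, Phi, M]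
  have hs : Function.Surjective φ := by
    intro g
    refine h.ind (P := fun g => ∃ i, φ i = g) ⟨v0, h0⟩ ?_ g
    rintro g c ⟨i, rfl⟩
    exact ⟨nb c i, hφ c i⟩
  refine ⟨⟨Equiv.ofBijective φ ⟨hi, hs⟩, ?_⟩, h0⟩
  intro i j
  change (cayley H (Set.range s)).Adj (φ i) (φ j) ↔ _
  rw [h.adj, hadj]
  refine exists_congr fun c => ?_
  rw [← hφ]
  exact hi.eq_iff

lemma stab {V : Type*} (Γ : SimpleGraph V) (nb : Fin 3 → V → V)
    (hadj : ∀ i j, Γ.Adj i j ↔ ∃ c, j = nb c i) (v0 : V) (T : Fin 6 → V → V)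
    (hinv : ∀ k i, T (![0, 2, 1, 3, 4, 5] k) (T k i) = i)
    (hT : ∀ k c i, ∃ d, T k (nb c i) = nb d (T k i)) (h0 : ∀ k, T k v0 = v0)
    (hpairs : ∀ c d, c ≠ d → ∃ k, T k (nb c v0) = nb 0 v0 ∧ T k (nb d v0) = nb 1 v0)
    (p q : V) (hp : Γ.Adj v0 p) (hq : Γ.Adj v0 q) (hpq : p ≠ q) :
    ∃ β : Γ ≃g Γ, β v0 = v0 ∧ β p = nb 0 v0 ∧ β q = nb 1 v0 := by
  have hh : ∀ k i j, Γ.Adj i j → Γ.Adj (T k i) (T k j) := by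
    intro k i j
    rw [hadj, hadj]
    rintro ⟨c, rfl⟩
    exact hT k c i
  obtain ⟨c, rfl⟩ := (hadj _ _).1 hp
  obtain ⟨d, rfl⟩ := (hadj _ _).1 hq
  obtain ⟨k, h1, h2⟩ := hpairs c d (by rintro rfl; exact hpq rfl)
  have hι : ∀ k : Fin 6, (![0, 2, 1, 3, 4, 5] : Fin 6 → Fin 6) (![0, 2, 1, 3, 4, 5] k) = k := by decide
  refine ⟨⟨⟨T k, T (![0, 2, 1, 3, 4, 5] k), hinv k, ?_⟩, ?_⟩, h0 k, h1, h2⟩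
  · intro i
    have := hinv (![0, 2, 1, 3, 4, 5] k) i
    rwa [hι] at this
  · intro i j
    refine ⟨fun h3 => ?_, hh k i j⟩
    have := hh (![0, 2, 1, 3, 4, 5] k) _ _ h3
    simpa [hinv] using this

/-- Left translation. -/
def leftT (T : Set H) (a : H) : cayley H T ≃g cayley H T where
  toEquiv := Equiv.mulLeft a
  map_rel_iff' := by
    intro g k
    simp [cayley, SimpleGraph.fromRel_adj, mul_assoc]

lemma twoArc {T : Set H} {V : Type*} (Γ : SimpleGraph V) (v0 w0 w1 : V)
    (ψ : Γ ≃g cayley H T) (hψ : ψ v0 = 1)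
    (hst : ∀ p q, Γ.Adj v0 p → Γ.Adj v0 q → p ≠ q →
      ∃ β : Γ ≃g Γ, β v0 = v0 ∧ β p = w0 ∧ β q = w1) :
    IsSArcTransitive (cayley H T) 2 := by
  have key : ∀ p : Fin 3 → H, IsSArc (cayley H T) 2 p → ∃ f : cayley H T ≃g cayley H T,
      f (p 0) = ψ w0 ∧ f (p 1) = 1 ∧ f (p 2) = ψ w1 := by
    rintro p ⟨h1, h2⟩
    have a1 := (h1 0).symm
    have a2 := h1 1
    have a3 : p 0 ≠ p 2 := h2 0 2 rfl
    change (cayley H T).Adj (p 1) (p 0) at a1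
    change (cayley H T).Adj (p 1) (p 2) at a2
    let μ := (leftT T (p 1)⁻¹).trans ψ.symm
    have m1 : μ (p 1) = v0 := by
      change ψ.symm ((p 1)⁻¹ * p 1) = v0
      rw [inv_mul_cancel, ← hψ]; simp
    obtain ⟨β, b0, b1, b2⟩ := hst (μ (p 0)) (μ (p 2)) (by rw [← m1]; exact μ.map_rel_iff.2 a1)
      (by rw [← m1]; exact μ.map_rel_iff.2 a2) (μ.injective.ne a3)
    refine ⟨(μ.trans β).trans ψ, ?_, ?_, ?_⟩
    · change ψ (β (μ (p 0))) = _
      rw [b1]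
    · change ψ (β (μ (p 1))) = _
      rw [m1, b0, hψ]
    · change ψ (β (μ (p 2))) = _
      rw [b2]
  intro p q hp hq
  obtain ⟨f, f0, f1, f2⟩ := key p hp
  obtain ⟨f', f0', f1', f2'⟩ := key q hq
  refine ⟨f.trans f'.symm, fun i => ?_⟩
  change f'.symm (f (p i)) = q i
  rw [RelIso.symm_apply_eq]
  match i with
  | 0 => rw [f0, f0']
  | 1 => rw [f1, f1']
  | 2 => rw [f2, f2']

/-- Conclusion of the main theorem. -/
def Concl (H : Type*) [Group H] (T : Set H) : Prop :=
  IsSArcTransitive (cayley H T) 2 ∧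
      (Nonempty (cayley H T ≃g heawood) ∨
       Nonempty (cayley H T ≃g pappus) ∨
       Nonempty (cayley H T ≃g mobiusKantor))

/-- Neighbours in a cyclic Haar graph in LCF form. -/
def nbC (N : ℕ) (c : Fin 3) (i : ZMod N) : ZMod N :=
  if i.val % 2 = 0 then i + ![1, -1, 5] c else i - ![1, -1, 5] c

def stH0 : Fin 6 → Fin 14 → Fin 14 :=
  ![![0, 1, 2, 3, 4, 5, 6, 7, 8, 9, 10, 11, 12, 13],
    ![0, 5, 4, 9, 8, 13, 12, 3, 2, 7, 6, 11, 10, 1],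
    ![0, 13, 8, 7, 2, 1, 10, 9, 4, 3, 12, 11, 6, 5],
    ![0, 13, 8, 9, 4, 5, 6, 7, 2, 3, 12, 11, 10, 1],
    ![0, 5, 4, 3, 2, 1, 10, 9, 8, 7, 6, 11, 12, 13],
    ![0, 1, 2, 7, 8, 13, 12, 3, 4, 9, 10, 11, 6, 5]]

def stM0 : Fin 6 → Fin 16 → Fin 16 :=
  ![![0, 1, 2, 3, 4, 5, 6, 7, 8, 9, 10, 11, 12, 13, 14, 15],
    ![0, 5, 4, 3, 14, 15, 10, 9, 8, 13, 12, 11, 6, 7, 2, 1],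
    ![0, 15, 14, 3, 2, 1, 12, 13, 8, 7, 6, 11, 10, 9, 4, 5],
    ![0, 15, 10, 11, 6, 5, 4, 9, 8, 7, 2, 3, 14, 13, 12, 1],
    ![0, 5, 6, 11, 12, 1, 2, 7, 8, 13, 14, 3, 4, 9, 10, 15],
    ![0, 1, 12, 11, 10, 15, 14, 13, 8, 9, 4, 3, 2, 7, 6, 5]]

def stP0 : Fin 6 → Fin 18 → Fin 18 :=
  ![![0, 1, 2, 3, 4, 5, 6, 7, 8, 9, 10, 11, 12, 13, 14, 15, 16, 17],
    ![0, 5, 6, 11, 12, 17, 16, 15, 4, 3, 10, 9, 8, 7, 14, 13, 2, 1],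
    ![0, 17, 16, 9, 8, 1, 2, 13, 12, 11, 10, 3, 4, 15, 14, 7, 6, 5],
    ![0, 17, 12, 11, 6, 5, 4, 15, 16, 9, 10, 3, 2, 13, 14, 7, 8, 1],
    ![0, 5, 4, 3, 2, 1, 8, 7, 6, 11, 10, 9, 16, 15, 14, 13, 12, 17],
    ![0, 1, 8, 9, 16, 17, 12, 13, 2, 3, 10, 11, 6, 7, 14, 15, 4, 5]]

def nbP0 : Fin 3 → Fin 18 → Fin 18 :=
  ![![1, 0, 3, 2, 5, 4, 7, 6, 9, 8, 11, 10, 13, 12, 15, 14, 17, 16],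
    ![17, 8, 13, 10, 15, 6, 5, 14, 1, 16, 3, 12, 11, 2, 7, 4, 9, 0],
    ![5, 2, 1, 4, 3, 0, 11, 8, 7, 10, 9, 6, 17, 14, 13, 16, 15, 12]]

def coP0 : Fin 18 → ℕ := ![0, 1, 2, 3, 4, 5, 10, 11, 6, 7, 8, 9, 14, 15, 16, 17, 12, 13]

def stH (k : Fin 6) (i : ZMod 14) : ZMod 14 := stH0 k i
def stM (k : Fin 6) (i : ZMod 16) : ZMod 16 := stM0 k i
def stP (k : Fin 6) (i : ZMod 18) : ZMod 18 := stP0 k i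
def nbP (c : Fin 3) (i : ZMod 18) : ZMod 18 := nbP0 c i
def coP (i : ZMod 18) : ℕ := coP0 i

set_option maxRecDepth 100000 in
lemma adjH : ∀ i j, heawood.Adj i j ↔ ∃ c, j = nbC 14 c i := by
  unfold heawood lcfGraph
  simp only [SimpleGraph.fromRel_adj]
  decide

set_option maxRecDepth 100000 in
lemma adjM : ∀ i j, mobiusKantor.Adj i j ↔ ∃ c, j = nbC 16 c i := by
  unfold mobiusKantor lcfGraph
  simp only [SimpleGraph.fromRel_adj]
  decide

set_option maxRecDepth 100000 in
lemma adjP : ∀ i j, pappus.Adj i j ↔ ∃ c, j = nbP c i := by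
  unfold pappus lcfGraph
  simp only [SimpleGraph.fromRel_adj]
  decide

lemma Su.cyc (h : Su s) (h1 : M s 2 1 = 1) {K : ℕ} (hK : orderOf (s 0 * s 1) = K) (p q : ℤ) :
    M s p q = 1 ↔ (K : ℤ) ∣ p - 2 * q := by
  rw [← hK, orderOf_dvd_iff_zpow_eq_one]
  have : M s p q = M s (p - 2 * q) 0 := by
    rw [h.M_eq]
    exact h.comb h1 h1 q 0 (by ring) (by ring)
  rw [this]; simp [M]

set_option maxRecDepth 100000 in
lemma Su.seven (h : Su s) (h1 : M s 2 1 = 1) (h2 : M s 7 0 = 1) : Concl H (Set.range s) := by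
  have hK : orderOf (s 0 * s 1) = 7 := by
    have : Fact (Nat.Prime 7) := ⟨by norm_num⟩
    apply orderOf_eq_prime
    · simpa [M] using h2
    · simpa [M] using h.forb.1
  obtain ⟨ψ, hψ⟩ := h.model heawood (nbC 14) adjH (fun p q => (7 : ℤ) ∣ p - 2 * q)
    (h.cyc h1 hK) (fun i => ((i.val / 2 : ℕ) : ℤ)) (fun _ => 0) (fun i => decide (i.val % 2 = 1))
    (by decide) (by decide) 0 (by decide) (by decide) (by decide)
  exact ⟨twoArc heawood 0 _ _ ψ hψ (stab heawood (nbC 14) adjH 0 stH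
    (by decide) (by decide) (by decide) (by decide)), Or.inl ⟨ψ.symm⟩⟩

set_option maxRecDepth 100000 in
lemma Su.eight (h : Su s) (h1 : M s 2 1 = 1) (h2 : M s 8 0 = 1) : Concl H (Set.range s) := by
  have hK : orderOf (s 0 * s 1) = 8 := by
    have : Fact (Nat.Prime 2) := ⟨by norm_num⟩
    apply orderOf_eq_prime_pow (p := 2) (n := 2)
    · intro h3
      obtain ⟨-, -, -, -, h5, -⟩ := h.forb
      have h4 : M s 4 0 = 1 := by
        simp only [M]; rw [zpow_zero, mul_one]; norm_num at h3; exact_mod_cast h3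
      exact h5 (h.comb h1 h4 2 (-1) (by norm_num) (by norm_num))
    · simp only [M] at h2
      rw [zpow_zero, mul_one] at h2; norm_num; exact_mod_cast h2
  obtain ⟨ψ, hψ⟩ := h.model mobiusKantor (nbC 16) adjM (fun p q => (8 : ℤ) ∣ p - 2 * q)
    (h.cyc h1 hK) (fun i => ((i.val / 2 : ℕ) : ℤ)) (fun _ => 0) (fun i => decide (i.val % 2 = 1))
    (by decide) (by decide) 0 (by decide) (by decide) (by decide)
  exact ⟨twoArc mobiusKantor 0 _ _ ψ hψ (stab mobiusKantor (nbC 16) adjM 0 stM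
    (by decide) (by decide) (by decide) (by decide)), Or.inr (Or.inr ⟨ψ.symm⟩)⟩

set_option maxRecDepth 100000 in
lemma Su.nine (h : Su s) (h1 : M s 3 0 = 1) (h2 : M s 0 3 = 1) : Concl H (Set.range s) := by
  have hL : ∀ p q, M s p q = 1 ↔ (3 : ℤ) ∣ p ∧ (3 : ℤ) ∣ q := by
    intro p q
    constructor
    · intro h3
      obtain ⟨b1, b2, b3, b4, b5, b6, b7, b8, b9⟩ := h.forb
      have h12 : M s (3 * (p / 3)) (3 * (q / 3)) = 1 := h.comb h1 h2 (p / 3) (q / 3) (by ring) (by ring)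
      have h4 : M s (p % 3) (q % 3) = 1 := h.comb h3 h12 1 (-1) (by omega) (by omega)
      have hp : p % 3 = 0 ∨ p % 3 = 1 ∨ p % 3 = 2 := by omega
      have hq : q % 3 = 0 ∨ q % 3 = 1 ∨ q % 3 = 2 := by omega
      rcases hp with hp | hp | hp <;> rcases hq with hq | hq | hq <;> rw [hp, hq] at h4
      · omega
      · exact absurd h4 b2
      · exact absurd h4 b5
      · exact absurd h4 b1
      · exact absurd h4 b7
      · exact absurd (h.comb h4 h2 1 (-1) (by norm_num) (by norm_num)) b3
      · exact absurd h4 b4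
      · exact absurd (h.comb h4 h2 1 (-1) (by norm_num) (by norm_num)) b6
      · have h5 : M s 1 4 = 1 := h.comb h4 h1 2 (-1) (by norm_num) (by norm_num)
        exact absurd (h.comb h5 h2 1 (-1) (by norm_num) (by norm_num)) b7
    · rintro ⟨⟨k, rfl⟩, ⟨l, rfl⟩⟩
      exact h.comb h1 h2 k l (by ring) (by ring)
  obtain ⟨ψ, hψ⟩ := h.model pappus nbP adjP (fun p q => (3 : ℤ) ∣ p ∧ (3 : ℤ) ∣ q)
    hL (fun i => ((coP i / 6 : ℕ) : ℤ)) (fun i => ((coP i / 2 % 3 : ℕ) : ℤ))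
    (fun i => decide (coP i % 2 = 1))
    (by decide) (by decide) 0 (by decide) (by decide) (by decide)
  exact ⟨twoArc pappus 0 _ _ ψ hψ (stab pappus nbP adjP 0 stP
    (by decide) (by decide) (by decide) (by decide)), Or.inr (Or.inl ⟨ψ.symm⟩)⟩

end models
section final

variable {H : Type*} [Group H] {s : Fin 3 → H}

lemma Su0.M_perm (h : Su0 s) (σ : Equiv.Perm (Fin 3)) (i j : ℤ) : M (s ∘ σ) i j =
    M s (i * (D1 (σ 1) - D1 (σ 0)) + j * (D1 (σ 2) - D1 (σ 0)))
      (i * (D2 (σ 1) - D2 (σ 0)) + j * (D2 (σ 2) - D2 (σ 0))) := by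
  rw [← h.M_mul, ← h.M_pow, ← h.M_pow, ← h.mul2, ← h.mul2]
  rfl

lemma HexW.perm (σ : Equiv.Perm (Fin 3)) {a b c : Fin 3} (h : HexW s (σ a) (σ b) (σ c)) :
    HexW (s ∘ σ) a b c := by
  obtain ⟨r, q, u, h1, h2, h3, h4, h5⟩ := h
  refine ⟨σ.symm r, σ.symm q, σ.symm u, ?_, ?_, ?_, ?_, ?_⟩
  · rintro rfl; simp at h1
  · intro h6; exact h2 (σ.symm.injective h6)
  · intro h6; exact h3 (σ.symm.injective h6)
  · rintro rfl; simp at h4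
  · simpa using h5

lemma Uniform.perm (σ : Equiv.Perm (Fin 3)) {f : H → H} (h : Uniform (s ∘ σ) f) : Uniform s f := by
  obtain ⟨τ, hτ⟩ := h
  refine ⟨fun i => σ (τ (σ.symm i)), fun g i => ?_⟩
  have := hτ g (σ.symm i)
  simpa using this

lemma range_perm {T : Set H} (hT : T = Set.range s) (σ : Equiv.Perm (Fin 3)) :
    T = Set.range (s ∘ σ) := by
  rw [hT, σ.surjective.range_comp]

lemma Su.uniform9' (h : Su s) {T : Set H} (hT : T = Set.range s) (h1 : M s 2 1 = 1)
    (h2 : M s 9 0 = 1) (f : cayley H T ≃g cayley H T) : Uniform s f := by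
  subst hT; exact h.uniform9 h1 h2 f

lemma Su.fin (h : Su s) {T : Set H} (hT : T = Set.range s) (f : cayley H T ≃g cayley H T)
    (hf : ¬ Uniform s f) (σ : Equiv.Perm (Fin 3))
    (h1 : M s (2 * (D1 (σ 1) - D1 (σ 0)) + 1 * (D1 (σ 2) - D1 (σ 0)))
      (2 * (D2 (σ 1) - D2 (σ 0)) + 1 * (D2 (σ 2) - D2 (σ 0))) = 1)
    (h2 : M s (7 * (D1 (σ 1) - D1 (σ 0)) + 0 * (D1 (σ 2) - D1 (σ 0)))
        (7 * (D2 (σ 1) - D2 (σ 0)) + 0 * (D2 (σ 2) - D2 (σ 0))) = 1 ∨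
      M s (8 * (D1 (σ 1) - D1 (σ 0)) + 0 * (D1 (σ 2) - D1 (σ 0)))
        (8 * (D2 (σ 1) - D2 (σ 0)) + 0 * (D2 (σ 2) - D2 (σ 0))) = 1 ∨
      M s (9 * (D1 (σ 1) - D1 (σ 0)) + 0 * (D1 (σ 2) - D1 (σ 0)))
        (9 * (D2 (σ 1) - D2 (σ 0)) + 0 * (D2 (σ 2) - D2 (σ 0))) = 1) : Concl H T := by
  simp only [← h.M_perm] at h1 h2
  have h' := h.perm σ
  have hT' := range_perm hT σ
  rcases h2 with h2 | h2 | h2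
  · rw [hT']; exact h'.seven h1 h2
  · rw [hT']; exact h'.eight h1 h2
  · exact absurd (h'.uniform9' hT' h1 h2 f).perm hf

lemma Su.core (h : Su s) {T : Set H} (hT : T = Set.range s) (f : cayley H T ≃g cayley H T)
    (hf : ¬ Uniform s f) (H1 : HexW s 1 0 1) (H2 : HexW s 2 0 2) : Concl H T := by
  obtain ⟨b1, b2, b3, b4, b5, b6, b7, b8, b9⟩ := h.forb
  rcases h.hexW_101 H1 with r1 | r1 | r1 | r1 <;> rcases h.hexW_202 H2 with r2 | r2 | r2 | r2
  · rw [hT]; exact h.nine r1 r2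
  · exact h.fin hT f hf ⟨![2, 0, 1], ![1, 2, 0], by decide, by decide⟩
      (h.comb r1 r2 (0) (-1) (by decide) (by decide))
      (Or.inr (Or.inr (h.comb r1 r2 (-1) (-3) (by decide) (by decide))))
  · exact absurd (h.comb r1 r2 (1) (-1) (by decide) (by decide)) b6
  · exact h.fin hT f hf ⟨![2, 1, 0], ![2, 1, 0], by decide, by decide⟩
      (h.comb r1 r2 (0) (-1) (by decide) (by decide))
      (Or.inr (Or.inr (h.comb r1 r2 (1) (-3) (by decide) (by decide))))
  · exact h.fin hT f hf ⟨![1, 0, 2], ![1, 0, 2], by decide, by decide⟩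
      (h.comb r1 r2 (-1) (0) (by decide) (by decide))
      (Or.inr (Or.inr (h.comb r1 r2 (-3) (-1) (by decide) (by decide))))
  · exact h.fin hT f hf ⟨![1, 0, 2], ![1, 0, 2], by decide, by decide⟩
      (h.comb r1 r2 (-1) (0) (by decide) (by decide))
      (Or.inr (Or.inl (h.comb r1 r2 (-3) (-1) (by decide) (by decide))))
  · exact h.fin hT f hf ⟨![1, 0, 2], ![1, 0, 2], by decide, by decide⟩
      (h.comb r1 r2 (-1) (0) (by decide) (by decide))
      (Or.inl (h.comb r1 r2 (-2) (-1) (by decide) (by decide)))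
  · exact h.fin hT f hf ⟨![1, 0, 2], ![1, 0, 2], by decide, by decide⟩
      (h.comb r1 r2 (-1) (0) (by decide) (by decide))
      (Or.inl (h.comb r1 r2 (-3) (-1) (by decide) (by decide)))
  · exact absurd (h.comb r1 r2 (1) (-1) (by decide) (by decide)) b6
  · exact h.fin hT f hf ⟨![0, 1, 2], ![0, 1, 2], by decide, by decide⟩
      (h.comb r1 r2 (1) (0) (by decide) (by decide))
      (Or.inl (h.comb r1 r2 (3) (-1) (by decide) (by decide)))
  · exact absurd (h.comb r1 r2 (1) (-1) (by decide) (by decide)) b3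
  · exact h.fin hT f hf ⟨![0, 1, 2], ![0, 1, 2], by decide, by decide⟩
      (h.comb r1 r2 (1) (0) (by decide) (by decide))
      (Or.inr (Or.inl (h.comb r1 r2 (3) (-1) (by decide) (by decide))))
  · exact h.fin hT f hf ⟨![1, 2, 0], ![2, 0, 1], by decide, by decide⟩
      (h.comb r1 r2 (-1) (0) (by decide) (by decide))
      (Or.inr (Or.inr (h.comb r1 r2 (-3) (1) (by decide) (by decide))))
  · exact h.fin hT f hf ⟨![1, 2, 0], ![2, 0, 1], by decide, by decide⟩
      (h.comb r1 r2 (-1) (0) (by decide) (by decide))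
      (Or.inl (h.comb r1 r2 (-2) (1) (by decide) (by decide)))
  · exact h.fin hT f hf ⟨![1, 2, 0], ![2, 0, 1], by decide, by decide⟩
      (h.comb r1 r2 (-1) (0) (by decide) (by decide))
      (Or.inr (Or.inl (h.comb r1 r2 (-3) (1) (by decide) (by decide))))
  · exact absurd (h.comb r1 r2 (1) (1) (by decide) (by decide)) b7

lemma Su.main (h : Su s) {T : Set H} (hT : T = Set.range s) (f : cayley H T ≃g cayley H T)
    (hf : ¬ Uniform s f) : Concl H T := by
  obtain ⟨k, hk⟩ : ∃ k, ∀ c, c ≠ k → HexW s c k c := by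
    subst hT; exact h.exists_color f hf
  let σ : Equiv.Perm (Fin 3) := Equiv.swap 0 k
  have h0 : σ 0 = k := Equiv.swap_apply_left 0 k
  refine (h.perm σ).core (range_perm hT σ) f (fun hu => hf hu.perm) ?_ ?_
  · apply HexW.perm; rw [h0]; apply hk; rw [← h0]; exact σ.injective.ne (by decide)
  · apply HexW.perm; rw [h0]; apply hk; rw [← h0]; exact σ.injective.ne (by decide)

lemma Su0.four_of_girth (h : Su0 s) (hi : Function.Injective s) {T : Set H} (hT : T = Set.range s)
    (hg : (cayley H T).girth = 6) : Su s := by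
  subst hT
  refine { h with inj := hi, four := ?_ }
  intro i j k l hij hjk hkl hli hw
  let Γ := cayley H (Set.range s)
  have a1 : Γ.Adj 1 (s i) := (h.adj _ _).2 ⟨i, by simp⟩
  have a2 : Γ.Adj (s i) (s i * s j) := (h.adj _ _).2 ⟨j, rfl⟩
  have a3 : Γ.Adj (s i * s j) (s i * s j * s k) := (h.adj _ _).2 ⟨k, rfl⟩
  have a4 : Γ.Adj (s i * s j * s k) 1 := (h.adj _ _).2 ⟨l, hw.symm⟩
  have n1 : s i * s j ≠ 1 := by
    intro h1; rw [mul_eq_one_iff_eq_inv, h.inv] at h1; exact hij (hi h1)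
  have n2 : s i * s j * s k ≠ s i := by
    intro h1; rw [mul_assoc, mul_eq_left, mul_eq_one_iff_eq_inv, h.inv] at h1; exact hjk (hi h1)
  let w : Γ.Walk 1 1 := .cons a1 (.cons a2 (.cons a3 (.cons a4 .nil)))
  have hc : w.IsCycle := by
    have e1 := a1.ne
    have e2 := a2.ne
    have e3 := a3.ne
    have e4 := a4.ne
    rw [SimpleGraph.Walk.cons_isCycle_iff]
    constructor
    · rw [SimpleGraph.Walk.isPath_def]
      simp only [SimpleGraph.Walk.support_cons, SimpleGraph.Walk.support_nil, List.nodup_cons,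
        List.mem_cons, List.not_mem_nil, or_false, not_or]
      exact ⟨⟨e2, n2.symm, e1.symm⟩, ⟨e3, n1⟩, e4, not_false, List.nodup_nil⟩
    · simp only [SimpleGraph.Walk.edges_cons, SimpleGraph.Walk.edges_nil, List.mem_cons,
        List.not_mem_nil, or_false, not_or, Sym2.eq_iff, not_and]
      refine ⟨⟨fun h1 => absurd h1 e1, fun h1 => absurd h1.symm n1⟩,
        ⟨fun h1 => absurd h1.symm n1, fun h1 => absurd h1.symm e4⟩,
        ⟨fun h1 => absurd h1.symm e4, fun _ h1 => n2 h1.symm⟩⟩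
  have := SimpleGraph.girth_le_length hc
  change Γ.girth ≤ 4 at this
  change Γ.girth = 6 at hg
  omega

end final

section presented

variable (m n ℓ : ℕ)

/-- The three generators of the connection set. -/
def ss : Fin 3 → G m n ℓ := ![gent m n ℓ, gent m n ℓ * genx m n ℓ, gent m n ℓ * geny m n ℓ]

lemma S_eq : S m n ℓ = Set.range (ss m n ℓ) := by
  unfold S ss
  simp only [Matrix.range_cons, Matrix.range_empty, Set.union_empty]
  rfl

lemma ss_su0 : Su0 (ss m n ℓ) := by
  have hr : ∀ r ∈ rels m n ℓ, PresentedGroup.mk (rels m n ℓ) r = 1 :=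
    fun r hr => PresentedGroup.one_of_mem hr
  have r1 : gent m n ℓ ^ 2 = 1 := hr (FreeGroup.of Gen.t ^ 2) (by simp [rels])
  have r2 : gent m n ℓ * genx m n ℓ * (gent m n ℓ)⁻¹ * genx m n ℓ = 1 :=
    hr (FreeGroup.of Gen.t * FreeGroup.of Gen.x * (FreeGroup.of Gen.t)⁻¹ * FreeGroup.of Gen.x)
      (by simp [rels])
  have r3 : gent m n ℓ * geny m n ℓ * (gent m n ℓ)⁻¹ * geny m n ℓ = 1 :=
    hr (FreeGroup.of Gen.t * FreeGroup.of Gen.y * (FreeGroup.of Gen.t)⁻¹ * FreeGroup.of Gen.y)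
      (by simp [rels])
  have r4 : genx m n ℓ * geny m n ℓ * (genx m n ℓ)⁻¹ * (geny m n ℓ)⁻¹ = 1 :=
    hr (FreeGroup.of Gen.x * FreeGroup.of Gen.y * (FreeGroup.of Gen.x)⁻¹ * (FreeGroup.of Gen.y)⁻¹)
      (by simp [rels])
  have sgn : ∃ χ : G m n ℓ →* ℤˣ, χ (gent m n ℓ) = -1 ∧ χ (genx m n ℓ) = 1 ∧ χ (geny m n ℓ) = 1 := by
    let f : Gen → ℤˣ := fun g => match g with
      | Gen.t => -1
      | Gen.x => 1
      | Gen.y => 1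
    have hf : ∀ r ∈ rels m n ℓ, FreeGroup.lift f r = 1 := by
      intro r hr
      simp only [rels, Set.mem_insert_iff, Set.mem_singleton_iff] at hr
      rcases hr with rfl | rfl | rfl | rfl | rfl | rfl <;> simp [f]
    exact ⟨PresentedGroup.toGroup hf, PresentedGroup.toGroup.of hf, PresentedGroup.toGroup.of hf,
      PresentedGroup.toGroup.of hf⟩
  have gen : Subgroup.closure (Set.range (ss m n ℓ)) = ⊤ := by
    rw [eq_top_iff, ← PresentedGroup.closure_range_of, Subgroup.closure_le]
    have q0 : gent m n ℓ ∈ Subgroup.closure (Set.range (ss m n ℓ)) :=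
      Subgroup.subset_closure ⟨0, rfl⟩
    have q1 : gent m n ℓ * genx m n ℓ ∈ Subgroup.closure (Set.range (ss m n ℓ)) :=
      Subgroup.subset_closure ⟨1, rfl⟩
    have q2 : gent m n ℓ * geny m n ℓ ∈ Subgroup.closure (Set.range (ss m n ℓ)) :=
      Subgroup.subset_closure ⟨2, rfl⟩
    rintro _ ⟨g, rfl⟩
    cases g
    · exact q0
    · exact (Subgroup.mul_mem_cancel_left _ q0).1 q1
    · exact (Subgroup.mul_mem_cancel_left _ q0).1 q2
  generalize hs : ss m n ℓ = s at *
  unfold ss at hs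
  revert r1 r2 r3 r4 sgn hs
  generalize gent m n ℓ = t
  generalize genx m n ℓ = x
  generalize geny m n ℓ = y
  intro r1 r2 r3 r4 sgn hs
  have hxy : x * y = y * x := by
    rw [mul_inv_eq_one, mul_inv_eq_iff_eq_mul] at r4; exact r4
  have tt : t * t = 1 := by rw [← sq, r1]
  let z : Fin 3 → G m n ℓ := ![1, x, y]
  have hsz : ∀ i, s i = t * z i := by
    intro i; subst hs; fin_cases i <;> simp [z]
  have hz : ∀ i j, Commute (z i) (z j) := by
    intro i j
    have hc : Commute x y := hxy
    fin_cases i <;> fin_cases j <;> simp [z, hc, hc.symm]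
  have ht : ∀ i, t * z i = (z i)⁻¹ * t := by
    intro i
    fin_cases i
    · simp [z]
    · change t * x = x⁻¹ * t
      rw [mul_eq_one_iff_eq_inv] at r2
      exact mul_inv_eq_iff_eq_mul.1 r2
    · change t * y = y⁻¹ * t
      rw [mul_eq_one_iff_eq_inv] at r3
      exact mul_inv_eq_iff_eq_mul.1 r3
  have sq' : ∀ i, s i * s i = 1 := by
    intro i
    rw [hsz]
    nth_rewrite 1 [ht]
    rw [mul_assoc, ← mul_assoc t t, tt, one_mul, inv_mul_cancel]
  refine ⟨sq', ?_, gen, ?_⟩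
  · intro i j k
    have e : s i * s j * s k = t * (z i * (z j)⁻¹ * z k) := by
      have e1 : s i * s j = (z i)⁻¹ * z j := by
        rw [hsz, hsz, ht i, mul_assoc, ← mul_assoc t t, tt, one_mul]
      have e2 : ∀ i, t * (z i)⁻¹ = z i * t := by
        intro i
        rw [mul_inv_eq_iff_eq_mul, mul_assoc, ht]; simp
      rw [e1, hsz]
      have e3 : t * (z i * (z j)⁻¹ * z k) = (z i)⁻¹ * z j * t * z k := by
        rw [← mul_assoc, ← mul_assoc, ht i, mul_assoc _ t, e2 j, ← mul_assoc]
      rw [e3, ← mul_assoc]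
    have e4 : t * (z i * (z j)⁻¹ * z k) = (z i * (z j)⁻¹ * z k)⁻¹ * t := by
      have e2 : ∀ i, t * (z i)⁻¹ = z i * t := by
        intro i
        rw [mul_inv_eq_iff_eq_mul, mul_assoc, ht]; simp
      have c1 : (z i * (z j)⁻¹ * z k)⁻¹ = (z i)⁻¹ * z j * (z k)⁻¹ := by
        have a1 := (hz i k).inv_inv.eq
        have a2 := (hz j k).inv_right.eq
        have a3 := (hz i j).inv_left.eq
        rw [mul_inv_rev, mul_inv_rev, inv_inv, ← a3, ← mul_assoc, ← a1, mul_assoc, ← a2, ← mul_assoc]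
      rw [c1, ← mul_assoc, ← mul_assoc, ht i, mul_assoc _ t, e2 j, ← mul_assoc, mul_assoc _ t,
        ht k, ← mul_assoc]
    rw [e]
    nth_rewrite 1 [e4]
    rw [mul_assoc, ← mul_assoc t t, tt, one_mul, inv_mul_cancel]
  · obtain ⟨χ, h1, h2, h3⟩ := sgn
    refine ⟨χ, fun i => ?_⟩
    subst hs
    fin_cases i <;> simp [h1, h2, h3]

lemma color_of_uniform (f : cayley (G m n ℓ) (S m n ℓ) ≃g cayley (G m n ℓ) (S m n ℓ))
    (hf : Uniform (ss m n ℓ) f) : IsColorPermuting f := by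
  obtain ⟨σ, hσ⟩ := hf
  let C : Fin 3 → Set (Sym2 (G m n ℓ)) := fun i => {e | ∃ g, e = s(g, g * ss m n ℓ i)}
  have hC : ∀ i, C i ∈ colorClasses m n ℓ := by
    intro i
    fin_cases i
    · exact Or.inl rfl
    · exact Or.inr (Or.inl rfl)
    · exact Or.inr (Or.inr rfl)
  have hC' : ∀ D ∈ colorClasses m n ℓ, ∃ i, D = C i := by
    rintro D (rfl | rfl | rfl)
    · exact ⟨0, rfl⟩
    · exact ⟨1, rfl⟩
    · exact ⟨2, rfl⟩
  intro D hD
  obtain ⟨i, rfl⟩ := hC' D hD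
  have : Sym2.map f '' C i = C (σ i) := by
    ext e
    constructor
    · rintro ⟨_, ⟨g, rfl⟩, rfl⟩
      exact ⟨f g, by rw [Sym2.map_mk, hσ]⟩
    · rintro ⟨g, rfl⟩
      refine ⟨_, ⟨f.symm g, rfl⟩, ?_⟩
      rw [Sym2.map_mk, hσ]; simp
  rw [this]
  exact hC _

lemma Su0.uniform_degenerate' {H : Type*} [Group H] {s : Fin 3 → H} (h : Su0 s)
    (hi : ¬ Function.Injective s) {T : Set H} (hT : T = Set.range s)
    (f : cayley H T ≃g cayley H T) : Uniform s f := by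
  subst hT; exact h.uniform_degenerate hi f

end presented

/-- If `Γ = HTG(m,n,ℓ)` has girth `6` and admits an automorphism that is not color
permuting, then `Γ` is `2`-arc-transitive and is isomorphic to the Heawood graph, the
Pappus graph or the Möbius–Kantor graph. -/
theorem statement19 (m n ℓ : ℕ) (hm : 0 < m) (hn : 4 ≤ n) (hne : Even n)
    (hl : ℓ ≤ n - 1) (hpar : ℓ % 2 = m % 2)
    (hgirth : (cayley (G m n ℓ) (S m n ℓ)).girth = 6)
    (hex : ∃ α : cayley (G m n ℓ) (S m n ℓ) ≃g cayley (G m n ℓ) (S m n ℓ),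
      ¬ IsColorPermuting α) :
    IsSArcTransitive (cayley (G m n ℓ) (S m n ℓ)) 2 ∧
      (Nonempty (cayley (G m n ℓ) (S m n ℓ) ≃g heawood) ∨
       Nonempty (cayley (G m n ℓ) (S m n ℓ) ≃g pappus) ∨
       Nonempty (cayley (G m n ℓ) (S m n ℓ) ≃g mobiusKantor)) := by
  obtain ⟨α, hα⟩ := hex
  have hu : ¬ Uniform (ss m n ℓ) α := fun h => hα (color_of_uniform m n ℓ α h)
  have h0 := ss_su0 m n ℓ
  have hi : Function.Injective (ss m n ℓ) := by
    by_contra hi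
    exact hu (h0.uniform_degenerate' hi (S_eq m n ℓ) α)
  exact (h0.four_of_girth hi (S_eq m n ℓ) hgirth).main (S_eq m n ℓ) α hu

end HTGPaper
end
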